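/- arXiv:1805.03488 — 4 statements merged into one kernel-verified Lean document; each statement's English description precedes it below -/
import Mathlib

section
/- Every finite simple graph G on n ≥ 1 vertices of degeneracy at most d admits a block vertex ordering of degeneracy at most 4d and length at most ⌊log₂ n⌋ + 1. -/
/-- A vertex ordering of a finite simple graph is represented by an injective map `σ : V → ℕ`.
The ordering `σ` has degeneracy at most `d` if every vertex `v` has at most `d` neighbors `u`
with `σ u < σ v`. -/
def OrderingDegenLE {V : Type} [Fintype V] [DecidableEq V] (G : SimpleGraph V)
    [DecidableRel G.Adj] (σ : V → ℕ) (d : ℕ) : Prop :=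
  ∀ v : V, ((G.neighborFinset v).filter fun u => σ u < σ v).card ≤ d

/-- The degeneracy of `G` is at most `d` if some vertex ordering of `G` has degeneracy
at most `d`. -/
def DegeneracyLE {V : Type} [Fintype V] [DecidableEq V] (G : SimpleGraph V)
    [DecidableRel G.Adj] (d : ℕ) : Prop :=
  ∃ σ : V → ℕ, Function.Injective σ ∧ OrderingDegenLE G σ d

/-!
A graph of degeneracy at most `d` has average degree at most `2 * d` on every finite vertex set:
each edge is counted once at its larger endpoint and once at its smaller one. By Markov's
inequality, fewer than half of the vertices of `S` have more than `4 * d` neighbors in `S`. Order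
these exceptional vertices recursively and append all the others as one last block; each step at
least halves the vertex set, so there are at most `⌊log₂ n⌋ + 1` blocks.
-/

section

open Finset

theorem mul_card_filter_mul_lt_lt_card {ι : Type*} {s : Finset ι} (hs : s.Nonempty) {f : ι → ℕ}
    {a : ℕ} (hf : ∑ i ∈ s, f i ≤ a * #s) (c : ℕ) : c * #{i ∈ s | c * a < f i} < #s := by
  set t := {i ∈ s | c * a < f i}
  have markov : #t * (c * a + 1) ≤ a * #s :=
    calc #t * (c * a + 1) ≤ ∑ i ∈ t, f i :=
          card_nsmul_le_sum t f _ fun i hi ↦ (mem_filter.1 hi).2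
      _ ≤ ∑ i ∈ s, f i := sum_le_sum_of_subset (filter_subset _ s)
      _ ≤ a * #s := hf
  by_contra! hle
  have ht : #t = 0 := by linarith [Nat.mul_le_mul_left a hle]
  exact hs.card_pos.ne' (by simpa [ht] using hle)

variable {V : Type*} (G : SimpleGraph V) [DecidableRel G.Adj]

/-- The number of neighbors of `v` in the finite vertex set `S`, i.e. the degree of `v` in the
subgraph induced on `S` when `v ∈ S`. -/
def degreeIn (S : Finset V) (v : V) : ℕ :=
  #{u ∈ S | G.Adj v u}

/-- The maximum average degree of `G` is at most `a`: every finite induced subgraph has average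
degree at most `a`. The average is cleared of denominators, so the empty set is harmless. -/
def MaxAvgDegreeLE (a : ℕ) : Prop :=
  ∀ S : Finset V, ∑ v ∈ S, degreeIn G S v ≤ a * #S

/-- A block vertex ordering of the subgraph induced on `S`, with `ℓ` nonempty blocks and degeneracy
at most `k`. The `i`-th block is `{v ∈ S | β v = i}` for `i < ℓ`; values of `β` outside `S` are
irrelevant. -/
structure IsBlockOrderingOn (S : Finset V) (β : V → ℕ) (ℓ k : ℕ) : Prop where
  image_eq : S.image β = range ℓ
  degreeIn_le : ∀ v ∈ S, degreeIn G {u ∈ S | β u ≤ β v} v ≤ k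

variable {G}

theorem degreeIn_mono {S T : Finset V} (h : S ⊆ T) (v : V) : degreeIn G S v ≤ degreeIn G T v :=
  card_le_card (filter_subset_filter _ h)

section Ordering

variable {α : Type*} [LinearOrder α] {σ : V → α} {S : Finset V}

theorem degreeIn_eq_degreeIn_lt_add_degreeIn_gt (hσ : Set.InjOn σ S) {v : V} (hv : v ∈ S) :
    degreeIn G S v = degreeIn G {u ∈ S | σ u < σ v} v + degreeIn G {u ∈ S | σ v < σ u} v := by
  have hne : ∀ u ∈ S, G.Adj v u → σ u ≠ σ v := fun u hu huv h ↦ huv.ne (hσ hv hu h.symm)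
  classical
  unfold degreeIn
  rw [← card_union_of_disjoint]
  · congr 1
    grind
  · simp only [disjoint_left, mem_filter]
    grind

variable (G σ S) in
theorem sum_degreeIn_gt_eq_sum_degreeIn_lt :
    ∑ v ∈ S, degreeIn G {u ∈ S | σ v < σ u} v = ∑ v ∈ S, degreeIn G {u ∈ S | σ u < σ v} v := by
  simpa only [degreeIn, filter_filter, bipartiteAbove, bipartiteBelow, G.adj_comm] using
    sum_card_bipartiteAbove_eq_sum_card_bipartiteBelow (s := S) (t := S)
      fun v u ↦ σ v < σ u ∧ G.Adj v u

theorem sum_degreeIn_eq_two_mul_sum_degreeIn_lt (hσ : Set.InjOn σ S) :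
    ∑ v ∈ S, degreeIn G S v = 2 * ∑ v ∈ S, degreeIn G {u ∈ S | σ u < σ v} v := by
  rw [sum_congr rfl fun v ↦ degreeIn_eq_degreeIn_lt_add_degreeIn_gt hσ, sum_add_distrib,
    sum_degreeIn_gt_eq_sum_degreeIn_lt, two_mul]

end Ordering

theorem DegeneracyLE.maxAvgDegreeLE {V : Type} [Fintype V] [DecidableEq V] {G : SimpleGraph V}
    [DecidableRel G.Adj] {d : ℕ} (h : DegeneracyLE G d) : MaxAvgDegreeLE G (2 * d) := by
  obtain ⟨σ, hσ, hd⟩ := h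
  intro S
  have hlt (v : V) : degreeIn G {u ∈ S | σ u < σ v} v ≤ d :=
    (card_le_card fun u ↦ by simp +contextual).trans (hd v)
  calc ∑ v ∈ S, degreeIn G S v
      = 2 * ∑ v ∈ S, degreeIn G {u ∈ S | σ u < σ v} v :=
        sum_degreeIn_eq_two_mul_sum_degreeIn_lt hσ.injOn
    _ ≤ 2 * (#S * d) := Nat.mul_le_mul_left 2 (sum_le_card_nsmul S _ d fun v _ ↦ hlt v)
    _ = 2 * d * #S := by ring

namespace IsBlockOrderingOn

variable (G) in
theorem empty (β : V → ℕ) (k : ℕ) : IsBlockOrderingOn G ∅ β 0 k :=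
  ⟨by simp, by simp⟩

theorem append_sdiff [DecidableEq V] {S T : Finset V} {β : V → ℕ} {ℓ k : ℕ}
    (hβ : IsBlockOrderingOn G T β ℓ k) (hTS : T ⊂ S)
    (hdeg : ∀ v ∈ S \ T, degreeIn G S v ≤ k) :
    IsBlockOrderingOn G S (T.piecewise β fun _ ↦ ℓ) (ℓ + 1) k where
  image_eq := by
    have himage_T : T.image (T.piecewise β fun _ ↦ ℓ) = range ℓ := by
      rw [← hβ.image_eq]
      exact image_congr fun v hv ↦ T.piecewise_eq_of_mem _ _ hv
    have himage_sdiff : (S \ T).image (T.piecewise β fun _ ↦ ℓ) = {ℓ} := by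
      rw [← image_const (sdiff_nonempty.2 hTS.not_subset) ℓ]
      exact image_congr fun v hv ↦ T.piecewise_eq_of_notMem _ _ (mem_sdiff.1 hv).2
    rw [← sdiff_union_of_subset hTS.subset, image_union, himage_T, himage_sdiff, range_add_one,
      insert_eq]
  degreeIn_le v hv := by
    by_cases hvT : v ∈ T
    · have hlt : β v < ℓ := mem_range.1 (hβ.image_eq ▸ mem_image_of_mem β hvT)
      refine (degreeIn_mono (fun u hu ↦ ?_) v).trans (hβ.degreeIn_le v hvT)
      by_cases huT : u ∈ T <;> simp_all [piecewise, hlt.not_ge]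
    · exact (degreeIn_mono (filter_subset _ S) v).trans (hdeg v (mem_sdiff.2 ⟨hv, hvT⟩))

end IsBlockOrderingOn

theorem MaxAvgDegreeLE.exists_isBlockOrderingOn {a : ℕ} (h : MaxAvgDegreeLE G a) (c : ℕ) {m : ℕ}
    {S : Finset V} (hS : #S < c ^ m) :
    ∃ ℓ ≤ m, ∃ β, IsBlockOrderingOn G S β ℓ (c * a) := by
  classical
  induction m generalizing S with
  | zero =>
    obtain rfl : S = ∅ := by simpa using hS
    exact ⟨0, le_rfl, 0, .empty G 0 _⟩
  | succ m ih =>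
    obtain rfl | hne := S.eq_empty_or_nonempty
    · exact ⟨0, Nat.zero_le _, 0, .empty G 0 _⟩
    let T : Finset V := {v ∈ S | c * a < degreeIn G S v}
    have hcard : c * #T < #S := mul_card_filter_mul_lt_lt_card hne (h S) c
    have hTm : #T < c ^ m := lt_of_mul_lt_mul_left' (hcard.trans (pow_succ' c m ▸ hS))
    have hc : 0 < c := Nat.pos_of_ne_zero fun h0 ↦ by simp [h0] at hS
    have hTS : T ⊂ S := (filter_subset _ S).ssubset_of_ne fun hT ↦
      (Nat.le_mul_of_pos_left #S hc).not_gt (hT ▸ hcard)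
    obtain ⟨ℓ, hℓ, β, hβ⟩ := ih hTm
    refine ⟨ℓ + 1, Nat.succ_le_succ hℓ, _, hβ.append_sdiff hTS fun v hv ↦ ?_⟩
    have ⟨hvS, hvT⟩ := mem_sdiff.1 hv
    exact not_lt.1 fun hlt ↦ hvT (mem_filter.2 ⟨hvS, hlt⟩)

theorem stmt1_general [Fintype V] {a c : ℕ} (h : MaxAvgDegreeLE G a) (hc : 1 < c) :
    ∃ (ℓ : ℕ) (β : V → ℕ),
      ℓ ≤ Nat.log c (Fintype.card V) + 1 ∧
      (∀ v, β v < ℓ) ∧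
      (∀ i, i < ℓ → ∃ v, β v = i) ∧
      (∀ v : V, ((G.neighborFinset v).filter fun u => β u ≤ β v).card ≤ c * a) := by
  obtain ⟨ℓ, hℓ, β, hβ⟩ := h.exists_isBlockOrderingOn c (S := univ)
    (Nat.lt_pow_succ_log_self hc _)
  have hmem (i : ℕ) : (∃ v, β v = i) ↔ i < ℓ := by
    simpa using congrArg (i ∈ ·) hβ.image_eq
  refine ⟨ℓ, β, hℓ, fun v ↦ (hmem _).1 ⟨v, rfl⟩, fun i ↦ (hmem i).2, fun v ↦ ?_⟩
  refine (card_le_card fun u ↦ ?_).trans (hβ.degreeIn_le v (mem_univ v))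
  simp +contextual

end

/-- Every graph on `n ≥ 1` vertices of degeneracy at most `d` admits a block vertex ordering
(an ordered partition into blocks, represented by the block-index function `β : V → ℕ`,
with all `ℓ` blocks nonempty) of degeneracy at most `4d` (every vertex has at most `4d`
neighbors in its own or smaller blocks) and length at most `⌊log₂ n⌋ + 1`. -/
theorem stmt1 {V : Type} [Fintype V] [DecidableEq V] (G : SimpleGraph V) [DecidableRel G.Adj]
    (n d : ℕ) (hn : n = Fintype.card V) (hpos : 1 ≤ n) (hdeg : DegeneracyLE G d) :
    ∃ (ℓ : ℕ) (β : V → ℕ),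
      ℓ ≤ Nat.log 2 n + 1 ∧
      (∀ v, β v < ℓ) ∧
      (∀ i, i < ℓ → ∃ v, β v = i) ∧
      (∀ v : V, ((G.neighborFinset v).filter fun u => β u ≤ β v).card ≤ 4 * d) := by
  subst hn
  simpa only [← mul_assoc, Nat.reduceMul] using stmt1_general hdeg.maxAvgDegreeLE one_lt_two
end

section
/- Let r ≥ 1 and d ≥ 1 be integers, let G be a finite simple graph, and let S be a nonempty subset of V(G) such that bconn_r(S,v) > 6rd³ for every v ∈ S. Then G admits a depth-(r−1) topological minor with edge density strictly larger than d. -/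
/-- `BConnGE G S u r m` holds if there is a family of `m` paths in `G`, each of length at
most `r`, starting in `u`, ending in a vertex of `S` different from `u`, with all internal
vertices outside `S`, and pairwise sharing only the vertex `u`. -/
def BConnGE {V : Type} (G : SimpleGraph V) (S : Set V) (u : V) (r m : ℕ) : Prop :=
  ∃ (t : Fin m → V) (P : ∀ i, G.Walk u (t i)),
    (∀ i, (P i).IsPath) ∧
    (∀ i, (P i).length ≤ r) ∧
    (∀ i, t i ∈ S ∧ t i ≠ u) ∧
    (∀ i, ∀ w ∈ (P i).support, w ≠ u → w ≠ t i → w ∉ S) ∧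
    (∀ i j, i ≠ j → ∀ w ∈ (P i).support, w ∈ (P j).support → w = u)

/-- The back-connectivity `bconn_r(S,u)`: the maximum cardinality of a family of paths as in
`BConnGE`. -/
noncomputable def bconn {V : Type} (G : SimpleGraph V) (S : Set V) (u : V) (r : ℕ) : ℕ :=
  sSup {m : ℕ | BConnGE G S u r m}

/-- `G` admits a depth-`r` topological minor `H` (witnessed by a topological minor model:
branch vertices `f` and internally disjoint paths of length at most `2r+1` for the edges
of `H`, internally avoiding all branch vertices) whose edge density `|E(H)|/|V(H)|`
is strictly larger than `d`. -/
def HasDepthTopMinorDensityGT {V : Type} (G : SimpleGraph V) (r : ℕ) (d : ℝ) : Prop :=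
  ∃ (m : ℕ) (H : SimpleGraph (Fin m)),
    0 < m ∧
    d < (H.edgeSet.ncard : ℝ) / (m : ℝ) ∧
    ∃ (f : Fin m → V) (P : ∀ (a b : Fin m), a < b → H.Adj a b → G.Walk (f a) (f b)),
      Function.Injective f ∧
      (∀ (a b : Fin m) (hab : a < b) (h : H.Adj a b), (P a b hab h).IsPath) ∧
      (∀ (a b : Fin m) (hab : a < b) (h : H.Adj a b), (P a b hab h).length ≤ 2 * r + 1) ∧
      (∀ (a b : Fin m) (hab : a < b) (h : H.Adj a b),
        ∀ w ∈ (P a b hab h).support, w ≠ f a → w ≠ f b → ∀ c : Fin m, w ≠ f c) ∧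
      (∀ (a b : Fin m) (hab : a < b) (h : H.Adj a b)
         (a' b' : Fin m) (hab' : a' < b') (h' : H.Adj a' b'), (a, b) ≠ (a', b') →
        ∀ w ∈ (P a b hab h).support, w ∈ (P a' b' hab' h').support → w = f a ∨ w = f b)

/-!
Write the radius of the back-connectivity as `r + 1`, and suppose that every topological minor of
`G` of depth `r` has density at most `d`. Choose a model of a depth-`r` topological minor with
branch set `S` and as many paths as possible. Its graph is `2d`-degenerate on `S`, hence has an
independent set `R ⊆ S` with `|S| ≤ (2d + 1)|R|`, and the set `M` of all vertices of the model has
at most `(1 + 2rd)|S|` elements.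

Cut the paths witnessing `bconn_{r+1}(S,v)`, for each `v ∈ R`, at their first vertex of `M` other
than `v`. As `R` is independent, the model has no path between two vertices of `R`, so by maximality
no path of length at most `2r + 1` that avoids `M` internally joins two vertices of `R`. Hence no
cut path ends in `R`, and two cut paths starting at different vertices of `R` cannot meet outside
`M`, so together the cut paths form a model with branch set `M`. It has at most `d|M|` paths, so
the back-connectivity is at most `(2d + 1)d(1 + 2rd) ≤ 6(r + 1)d³` at some vertex of `R`.
-/

open Finset

section IndependentSet

variable {V : Type*} (K : SimpleGraph V) [DecidableRel K.Adj]

theorem exists_card_adj_le_of_ncard_edgeSet_induce_le {B : Finset V} (hB : B.Nonempty) {d : ℕ}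
    (h : (K.induce (B : Set V)).edgeSet.ncard ≤ d * #B) :
    ∃ v ∈ B, #{w ∈ B | K.Adj v w} ≤ 2 * d := by
  have card_adj (v : (B : Set V)) : #{w ∈ B | K.Adj v w} = (K.induce (B : Set V)).degree v := by
    rw [← SimpleGraph.card_neighborFinset_eq_degree,
      ← card_map (.subtype (· ∈ (B : Set V)))]
    congr 1
    ext w
    simp [and_comm]
  have sum_degrees : ∑ v : (B : Set V), (K.induce (B : Set V)).degree v ≤
      ∑ _v : (B : Set V), 2 * d := by
    rw [SimpleGraph.sum_degrees_eq_twice_card_edges, ← Set.ncard_coe_finset,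
      SimpleGraph.coe_edgeFinset]
    simp only [sum_const, card_univ, Fintype.card_coe, smul_eq_mul, coe_sort_coe]
    linarith
  have : Nonempty (B : Set V) := hB.to_subtype
  obtain ⟨v, -, hv⟩ := exists_le_of_sum_le univ_nonempty sum_degrees
  exact ⟨v, v.2, (card_adj v).trans_le hv⟩

theorem exists_isIndepSet_card_le_mul_of_degenerate {k : ℕ} (S : Finset V)
    (h : ∀ B ⊆ S, B.Nonempty → ∃ v ∈ B, #{w ∈ B | K.Adj v w} ≤ k) :
    ∃ R ⊆ S, K.IsIndepSet (R : Set V) ∧ #S ≤ (k + 1) * #R := by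
  classical
  induction S using Finset.strongInduction with
  | H S ih =>
    obtain rfl | hS := S.eq_empty_or_nonempty
    · exact ⟨∅, by simp⟩
    obtain ⟨v, hv, hdeg⟩ := h S subset_rfl hS
    set N : Finset V := insert v {w ∈ S | K.Adj v w} with hN
    have hNS : N ⊆ S := insert_subset hv (filter_subset _ _)
    have hcardN : #N ≤ k + 1 := (card_insert_le _ _).trans (Nat.succ_le_succ hdeg)
    have hvN : v ∈ N := mem_insert_self _ _
    obtain ⟨R, hR, hind, hcard⟩ := ih (S \ N) (sdiff_ssubset hNS ⟨v, hvN⟩)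
      fun B hB => h B (hB.trans sdiff_subset)
    have hvR : v ∉ R := fun hvR => (mem_sdiff.1 (hR hvR)).2 hvN
    have hnadj : ∀ w ∈ R, ¬ K.Adj v w := fun w hw hvw =>
      (mem_sdiff.1 (hR hw)).2 (by simp [hN, hvw, (mem_sdiff.1 (hR hw)).1])
    refine ⟨insert v R, insert_subset hv (hR.trans sdiff_subset), ?_, ?_⟩
    · rw [coe_insert, SimpleGraph.isIndepSet_iff]
      exact hind.insert fun w hw _ => ⟨hnadj w hw, fun hwv => hnadj w hw hwv.symm⟩
    · rw [card_insert_of_notMem hvR, mul_add_one, ← card_sdiff_add_card_eq_card hNS]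
      exact Nat.add_le_add hcard hcardN

end IndependentSet

/-- A path of `G` bundled with its endpoints, so that paths with varying endpoints can be collected
in a `Finset`. -/
structure BundledPath {V : Type*} (G : SimpleGraph V) where
  source : V
  target : V
  walk : G.Walk source target
  isPath : walk.IsPath

namespace BundledPath

variable {V : Type*} {G : SimpleGraph V}

/-- The unordered pair of endpoints of a path: the edge it replaces in a subdivision. -/
def ends (p : BundledPath G) : Sym2 V := s(p.source, p.target)

variable [DecidableEq V]

/-- The internal vertices of a path. -/
def interior (p : BundledPath G) : Finset V := p.walk.support.toFinset \ {p.source, p.target}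

theorem mem_interior {p : BundledPath G} {x : V} :
    x ∈ p.interior ↔ x ∈ p.walk.support ∧ x ≠ p.source ∧ x ≠ p.target := by
  simp [interior]

theorem eq_or_eq_or_mem_interior {p : BundledPath G} {x : V} (hx : x ∈ p.walk.support) :
    x = p.source ∨ x = p.target ∨ x ∈ p.interior := by
  rw [mem_interior]
  tauto

theorem card_interior_add_one {p : BundledPath G} (h : p.source ≠ p.target) :
    #p.interior + 1 = p.walk.length := by
  have hends : {p.source, p.target} ⊆ p.walk.support.toFinset := by
    simp [insert_subset_iff]
  have := card_sdiff_add_card_eq_card hends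
  rw [card_pair h, List.toFinset_card_of_nodup p.isPath.support_nodup,
    SimpleGraph.Walk.length_support] at this
  exact Nat.succ.inj this

theorem exists_walk_of_ends_eq {p : BundledPath G} {u v : V} (h : p.ends = s(u, v)) :
    ∃ q : G.Walk u v, q.IsPath ∧ q.length = p.walk.length ∧
      ∀ x ∈ q.support, x = u ∨ x = v ∨ x ∈ p.interior := by
  obtain ⟨a, b, w, hw⟩ := p
  obtain ⟨rfl, rfl⟩ | ⟨rfl, rfl⟩ := Sym2.eq_iff.1 h
  · exact ⟨w, hw, rfl, fun x hx => eq_or_eq_or_mem_interior hx⟩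
  · refine ⟨w.reverse, hw.reverse, w.length_reverse, fun x hx => ?_⟩
    rw [SimpleGraph.Walk.support_reverse, List.mem_reverse] at hx
    exact or_left_comm.1 (eq_or_eq_or_mem_interior hx)

theorem exists_walk_to_mem_interior {p : BundledPath G} {x : V} (hx : x ∈ p.interior) :
    ∃ w : G.Walk p.source x, w.length < p.walk.length ∧
      ∀ y ∈ w.support, y = p.source ∨ y ∈ p.interior := by
  obtain ⟨hxp, -, hxt⟩ := mem_interior.1 hx
  refine ⟨p.walk.takeUntil x hxp, p.walk.length_takeUntil_lt_length hxp hxt, fun y hy => ?_⟩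
  have hyt : y ≠ p.target := by
    rintro rfl
    exact SimpleGraph.Walk.endpoint_notMem_support_takeUntil p.isPath hxp hxt.symm hy
  obtain h | h | h :=
    eq_or_eq_or_mem_interior (p.walk.support_takeUntil_subset_support hxp hy)
  exacts [.inl h, absurd h hyt, .inr h]

theorem exists_path_of_mem_interior {p q : BundledPath G} {x : V} (hp : x ∈ p.interior)
    (hq : x ∈ q.interior) :
    ∃ s : BundledPath G, s.source = p.source ∧ s.target = q.source ∧
      s.walk.length + 2 ≤ p.walk.length + q.walk.length ∧
      s.interior ⊆ p.interior ∪ q.interior := by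
  obtain ⟨w, hw, hws⟩ := exists_walk_to_mem_interior hp
  obtain ⟨w', hw', hws'⟩ := exists_walk_to_mem_interior hq
  let c := w.append w'.reverse
  have hc : c.length = w.length + w'.length := by simp [c]
  refine ⟨⟨_, _, c.bypass, c.bypass_isPath⟩, rfl, rfl, ?_, fun y hy => ?_⟩
  · have := c.length_bypass_le_length
    lia
  · obtain ⟨hys, hyp, hyq⟩ := mem_interior.1 hy
    have hyc := c.support_bypass_subset_support hys
    rw [SimpleGraph.Walk.mem_support_append_iff, SimpleGraph.Walk.support_reverse,
      List.mem_reverse] at hyc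
    exact mem_union.2 (hyc.imp (fun h => (hws y h).resolve_left hyp)
      fun h => (hws' y h).resolve_left hyq)

end BundledPath

/-- `IsTopMinorModel B ℓ P`: the paths in `P`, each of length at most `ℓ`, form a subdivision of a
simple graph whose branch vertices lie in `B`, and their internal vertices avoid `B`. -/
structure IsTopMinorModel {V : Type*} [DecidableEq V] {G : SimpleGraph V} (B : Finset V) (ℓ : ℕ)
    (P : Finset (BundledPath G)) : Prop where
  ends_mem_sym2 : ∀ p ∈ P, p.ends ∈ B.sym2
  source_ne_target : ∀ p ∈ P, p.source ≠ p.target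
  length_le : ∀ p ∈ P, p.walk.length ≤ ℓ
  disjoint_interior : ∀ p ∈ P, Disjoint p.interior B
  pairwise : (P : Set (BundledPath G)).Pairwise fun p q =>
    p.ends ≠ q.ends ∧ Disjoint p.interior q.interior

/-- The graph of which `P` is a subdivision, on the vertex set of the ambient graph. -/
def endsGraph {V : Type*} {G : SimpleGraph V} (P : Finset (BundledPath G)) : SimpleGraph V :=
  .fromEdgeSet (BundledPath.ends '' (P : Set (BundledPath G)))

namespace IsTopMinorModel

variable {V : Type*} [DecidableEq V] {G : SimpleGraph V} {B : Finset V} {ℓ : ℕ}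
  {P : Finset (BundledPath G)}

theorem source_mem (h : IsTopMinorModel B ℓ P) {p : BundledPath G} (hp : p ∈ P) : p.source ∈ B :=
  (mk_mem_sym2_iff.1 (h.ends_mem_sym2 p hp)).1

theorem target_mem (h : IsTopMinorModel B ℓ P) {p : BundledPath G} (hp : p ∈ P) : p.target ∈ B :=
  (mk_mem_sym2_iff.1 (h.ends_mem_sym2 p hp)).2

theorem injOn_ends (h : IsTopMinorModel B ℓ P) :
    Set.InjOn BundledPath.ends (P : Set (BundledPath G)) :=
  fun _ hp _ hq hpq => by_contra fun hne => (h.pairwise hp hq hne).1 hpq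

theorem edgeSet_endsGraph (h : IsTopMinorModel B ℓ P) :
    (endsGraph P).edgeSet = BundledPath.ends '' (P : Set (BundledPath G)) := by
  rw [endsGraph, SimpleGraph.edgeSet_fromEdgeSet, sdiff_eq_left, Set.disjoint_left]
  rintro _ ⟨p, hp, rfl⟩ hdiag
  exact h.source_ne_target p hp (Sym2.mk_isDiag_iff.1 hdiag)

theorem ncard_edgeSet_comap_endsGraph (h : IsTopMinorModel B ℓ P) {W : Type*} {f : W → V}
    (hf : f.Injective) (hrange : Set.range f = B) :
    ((endsGraph P).comap f).edgeSet.ncard = #P := by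
  have himage : Sym2.map f '' ((endsGraph P).comap f).edgeSet =
      BundledPath.ends '' (P : Set (BundledPath G)) := by
    rw [← h.edgeSet_endsGraph]
    refine Set.Subset.antisymm ?_ fun e he => ?_
    · rintro _ ⟨e, he, rfl⟩
      induction e using Sym2.ind with | _ a b => exact he
    · obtain ⟨p, hp, rfl⟩ := h.edgeSet_endsGraph ▸ he
      obtain ⟨a, ha⟩ := hrange.ge (h.source_mem hp)
      obtain ⟨b, hb⟩ := hrange.ge (h.target_mem hp)
      rw [BundledPath.ends, ← ha, ← hb] at he ⊢
      exact ⟨s(a, b), he, rfl⟩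
  rw [← Set.ncard_image_of_injective _ (Sym2.map.injective hf), himage,
    h.injOn_ends.ncard_image, Set.ncard_coe_finset]

theorem restrict (h : IsTopMinorModel B ℓ P) {A : Finset V} (hAB : A ⊆ B) :
    IsTopMinorModel A ℓ {p ∈ P | p.ends ∈ A.sym2} where
  ends_mem_sym2 _ hp := (mem_filter.1 hp).2
  source_ne_target p hp := h.source_ne_target p (mem_filter.1 hp).1
  length_le p hp := h.length_le p (mem_filter.1 hp).1
  disjoint_interior p hp := (h.disjoint_interior p (mem_filter.1 hp).1).mono_right hAB
  pairwise := h.pairwise.mono (coe_subset.2 (filter_subset _ _))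

theorem ncard_edgeSet_induce_endsGraph_le (h : IsTopMinorModel B ℓ P) {d : ℕ}
    (hsparse : ∀ (A : Finset V) (Q : Finset (BundledPath G)),
      IsTopMinorModel A ℓ Q → #Q ≤ d * #A) {A : Finset V} (hAB : A ⊆ B) :
    ((endsGraph P).induce (A : Set V)).edgeSet.ncard ≤ d * #A := by
  let Q : Finset (BundledPath G) := {p ∈ P | p.ends ∈ A.sym2}
  have hQ : IsTopMinorModel A ℓ Q := h.restrict hAB
  have hinduce : (endsGraph P).induce (A : Set V) = (endsGraph Q).induce (A : Set V) := by
    ext ⟨a, ha⟩ ⟨b, hb⟩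
    have hab : s(a, b) ∈ A.sym2 := mk_mem_sym2_iff.2 ⟨ha, hb⟩
    simp only [SimpleGraph.comap_adj, Function.Embedding.subtype_apply, endsGraph,
      SimpleGraph.fromEdgeSet_adj, Set.mem_image, mem_coe, Q, mem_filter]
    grind
  rw [hinduce]
  exact (hQ.ncard_edgeSet_comap_endsGraph Subtype.val_injective
    Subtype.range_coe).trans_le (hsparse A Q hQ)

theorem exists_subset_independent (h : IsTopMinorModel B ℓ P) {d : ℕ}
    (hsparse : ∀ (A : Finset V) (Q : Finset (BundledPath G)),
      IsTopMinorModel A ℓ Q → #Q ≤ d * #A) :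
    ∃ R ⊆ B, (∀ p ∈ P, p.source ∈ R → p.target ∉ R) ∧ #B ≤ (2 * d + 1) * #R := by
  classical
  obtain ⟨R, hRB, hind, hcard⟩ := exists_isIndepSet_card_le_mul_of_degenerate (endsGraph P) B
    fun A hAB hA => exists_card_adj_le_of_ncard_edgeSet_induce_le _ hA
      (h.ncard_edgeSet_induce_endsGraph_le hsparse hAB)
  refine ⟨R, hRB, fun p hp hs ht => hind hs ht (h.source_ne_target p hp) ?_, hcard⟩
  rw [← SimpleGraph.mem_edgeSet, h.edgeSet_endsGraph]
  exact ⟨p, hp, rfl⟩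

theorem card_union_biUnion_interior_le (h : IsTopMinorModel B ℓ P) :
    #(B ∪ P.biUnion BundledPath.interior) ≤ #B + #P * (ℓ - 1) := by
  refine (card_union_le _ _).trans (Nat.add_le_add_left (card_biUnion_le_card_mul _ _ _ ?_) _)
  intro p hp
  have := BundledPath.card_interior_add_one (h.source_ne_target p hp)
  have := h.length_le p hp
  lia

theorem cons (h : IsTopMinorModel B ℓ P) {p : BundledPath G} (hpP : p ∉ P)
    (hends : p.ends ∈ B.sym2) (hne : p.source ≠ p.target) (hlen : p.walk.length ≤ ℓ)
    (hdisj : Disjoint p.interior (B ∪ P.biUnion BundledPath.interior))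
    (hnew : ∀ q ∈ P, q.ends ≠ p.ends) : IsTopMinorModel B ℓ (P.cons p hpP) where
  ends_mem_sym2 := (forall_mem_cons ..).2 ⟨hends, h.ends_mem_sym2⟩
  source_ne_target := (forall_mem_cons ..).2 ⟨hne, h.source_ne_target⟩
  length_le := (forall_mem_cons ..).2 ⟨hlen, h.length_le⟩
  disjoint_interior := (forall_mem_cons ..).2
    ⟨(disjoint_union_right.1 hdisj).1, h.disjoint_interior⟩
  pairwise := by
    rw [coe_cons]
    refine h.pairwise.insert fun q hq _ => ?_
    have hpq : Disjoint p.interior q.interior :=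
      (disjoint_biUnion_right _ _ _).1 (disjoint_union_right.1 hdisj).2 q hq
    exact ⟨⟨(hnew q hq).symm, hpq⟩, ⟨hnew q hq, hpq.symm⟩⟩

theorem exists_ends_eq_of_maximalFor (h : MaximalFor (IsTopMinorModel (G := G) B ℓ) card P)
    {p : BundledPath G} (hends : p.ends ∈ B.sym2) (hne : p.source ≠ p.target)
    (hlen : p.walk.length ≤ ℓ)
    (hdisj : Disjoint p.interior (B ∪ P.biUnion BundledPath.interior)) :
    ∃ q ∈ P, q.ends = p.ends := by
  by_contra! hnew
  have hpP : p ∉ P := fun hp => hnew p hp rfl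
  have := h.2 (h.1.cons hpP hends hne hlen hdisj hnew)
  simp at this

end IsTopMinorModel

theorem exists_maximalFor_isTopMinorModel {V : Type*} [DecidableEq V] (G : SimpleGraph V)
    (B : Finset V) (ℓ : ℕ) {n : ℕ}
    (hcard : ∀ P : Finset (BundledPath G), IsTopMinorModel B ℓ P → #P ≤ n) :
    ∃ P : Finset (BundledPath G), MaximalFor (IsTopMinorModel B ℓ) card P :=
  Set.Finite.exists_maximalFor' card {P | IsTopMinorModel B ℓ P}
    ((Set.finite_Iic n).subset (Set.image_subset_iff.2 hcard)) ⟨∅, by constructor <;> simp⟩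

section Minor

variable {V : Type} [DecidableEq V] {G : SimpleGraph V} {B : Finset V} {r : ℕ}
  {P : Finset (BundledPath G)}

theorem IsTopMinorModel.hasDepthTopMinorDensityGT (h : IsTopMinorModel B (2 * r + 1) P) {d : ℝ}
    (hd : 0 ≤ d) (hcard : d * #B < #P) : HasDepthTopMinorDensityGT G r d := by
  have hB : 0 < #B := by
    have hP : (0 : ℝ) < #P := (by positivity : 0 ≤ d * #B).trans_lt hcard
    obtain ⟨p, hp⟩ := card_pos.1 (by exact_mod_cast hP)
    exact card_pos.2 ⟨_, h.source_mem hp⟩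
  let f : Fin #B → V := fun i => B.equivFin.symm i
  have hf : f.Injective := Subtype.val_injective.comp B.equivFin.symm.injective
  have hfB : ∀ i, f i ∈ B := fun i => (B.equivFin.symm i).2
  have hrange : Set.range f = B := by
    simp [f, Set.range_comp' Subtype.val B.equivFin.symm]
  have hpath : ∀ a b, (endsGraph P).Adj a b → ∃ p ∈ P, p.ends = s(a, b) := fun a b hab => by
    rwa [← SimpleGraph.mem_edgeSet, h.edgeSet_endsGraph] at hab
  choose p hpP hpends using hpath
  choose w hwpath hwlen hwsupp using fun a b hab =>
    BundledPath.exists_walk_of_ends_eq (hpends a b hab)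
  have hinterior : ∀ a b (hab : (endsGraph P).Adj (f a) (f b)),
      ∀ c, f c ∉ (p _ _ hab).interior := fun a b hab c hc =>
    disjoint_left.1 (h.disjoint_interior _ (hpP _ _ hab)) hc (hfB c)
  refine ⟨#B, (endsGraph P).comap f, hB, ?_, f, fun a b _ hab => w (f a) (f b) hab, hf,
    fun a b _ hab => hwpath _ _ hab, fun a b _ hab => ?_, fun a b _ hab x hx hxa hxb c hc => ?_,
    fun a b hlt hab a' b' hlt' hab' hne x hx hx' => ?_⟩
  · rwa [h.ncard_edgeSet_comap_endsGraph hf hrange, lt_div_iff₀ (by exact_mod_cast hB)]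
  · exact (hwlen _ _ hab).trans_le (h.length_le _ (hpP _ _ hab))
  · obtain hx | hx | hx := hwsupp _ _ hab x hx
    exacts [hxa hx, hxb hx, hinterior a b hab c (hc ▸ hx)]
  · have hpne : p _ _ hab ≠ p _ _ hab' := by
      intro heq
      have hends : s(f a, f b) = s(f a', f b') :=
        (hpends _ _ hab).symm.trans (heq ▸ hpends _ _ hab')
      obtain ⟨ha, hb⟩ | ⟨ha, hb⟩ := Sym2.eq_iff.1 hends
      · exact hne (Prod.ext (hf ha) (hf hb))
      · exact lt_asymm hlt (hf ha ▸ hf hb ▸ hlt')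
    have hdisj := (h.pairwise (hpP _ _ hab) (hpP _ _ hab') hpne).2
    obtain hxa | hxb | hxp := hwsupp _ _ hab x hx
    · exact .inl hxa
    · exact .inr hxb
    · obtain rfl | rfl | hxp' := hwsupp _ _ hab' x hx'
      exacts [(hinterior a b hab _ hxp).elim, (hinterior a b hab _ hxp).elim,
        (disjoint_left.1 hdisj hxp hxp').elim]

end Minor

section BackConnectivity

variable {V : Type} {G : SimpleGraph V} {S : Set V} {v : V} {r m n : ℕ}

theorem BConnGE.mono_card (h : BConnGE G S v r n) (hmn : m ≤ n) : BConnGE G S v r m := by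
  obtain ⟨t, w, hpath, hlen, ht, hS, hdisj⟩ := h
  let c : Fin m ↪ Fin n := Fin.castLEEmb hmn
  exact ⟨t ∘ c, fun i => w (c i), fun i => hpath _, fun i => hlen _, fun i => ht _,
    fun i => hS _, fun i j hij => hdisj _ _ (c.injective.ne hij)⟩

theorem bConnGE_of_lt_bconn (h : m < bconn G S v r) : BConnGE G S v r (m + 1) := by
  obtain ⟨n, hn, hmn⟩ := exists_lt_of_lt_csSup' h
  exact hn.mono_card hmn

theorem BConnGE.mono_set {M : Finset V} (h : BConnGE G S v r m) (hSM : S ⊆ M) :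
    BConnGE G M v r m := by
  classical
  obtain ⟨t, w, hpath, hlen, ht, -, hdisj⟩ := h
  have hfirst : ∀ i, ∃ x ∈ M.erase v, ∃ hx : x ∈ (w i).support,
      ∀ y ∈ M.erase v, y ∈ ((w i).takeUntil x hx).support → y = x := fun i =>
    (w i).exists_mem_support_forall_mem_support_imp_eq _
      ⟨t i, by simp [(ht i).2, mem_coe.1 (hSM (ht i).1)]⟩
  choose x hxM hx hfirst using hfirst
  refine ⟨x, fun i => (w i).takeUntil (x i) (hx i), fun i => (hpath i).takeUntil _,
    fun i => ((w i).length_takeUntil_le_length _).trans (hlen i),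
    fun i => (mem_erase.1 (hxM i)).symm, fun i y hy hyv hyx hyM => ?_, fun i j hij y hy hy' => ?_⟩
  · exact hyx (hfirst i y (mem_erase.2 ⟨hyv, hyM⟩) hy)
  · exact hdisj i j hij y ((w i).support_takeUntil_subset_support _ hy)
      ((w j).support_takeUntil_subset_support _ hy')

theorem BConnGE.exists_isTopMinorModel [DecidableEq V] {M : Finset V} (h : BConnGE G M v r m)
    (hv : v ∈ M) :
    ∃ Q : Finset (BundledPath G), IsTopMinorModel M r Q ∧ (∀ q ∈ Q, q.source = v) ∧ #Q = m := by
  obtain ⟨t, w, hpath, hlen, ht, hM, hdisj⟩ := h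
  let q : Fin m → BundledPath G := fun i => ⟨v, t i, w i, hpath i⟩
  have ht_inj : t.Injective := fun i j hij => by_contra fun hne =>
    (ht i).2 (hdisj i j hne _ (w i).end_mem_support (by simp [hij]))
  have hq_inj : q.Injective := fun i j hij => ht_inj (congrArg BundledPath.target hij)
  refine ⟨univ.map ⟨q, hq_inj⟩, ⟨?_, ?_, ?_, ?_, ?_⟩, by simp [q], by simp⟩
  · simp [q, BundledPath.ends, hv, fun i => mem_coe.1 (ht i).1]
  · simpa [q] using fun i => (ht i).2.symm
  · simpa [q] using hlen
  · simp only [mem_map, mem_univ, Function.Embedding.coeFn_mk, true_and, forall_exists_index,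
      forall_apply_eq_imp_iff, disjoint_left, BundledPath.mem_interior, q]
    exact fun i x hx => hM i x hx.1 hx.2.1 hx.2.2
  · rw [coe_map, coe_univ, Set.image_univ]
    rintro _ ⟨i, rfl⟩ _ ⟨j, rfl⟩ hij
    have hne : i ≠ j := fun h => hij (congrArg q h)
    refine ⟨fun hends => hne (ht_inj (Sym2.congr_right.1 hends)), disjoint_left.2 fun x hi hj => ?_⟩
    rw [BundledPath.mem_interior] at hi hj
    exact hi.2.1 (hdisj i j hne x hi.1 hj.1)

end BackConnectivity

theorem isTopMinorModel_biUnion_of_source_eq {V : Type*} [DecidableEq V] {G : SimpleGraph V}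
    [DecidableEq (BundledPath G)] {M R : Finset V} {r : ℕ} {Q : V → Finset (BundledPath G)}
    (hQ : ∀ v ∈ R, IsTopMinorModel M (r + 1) (Q v)) (hsource : ∀ v ∈ R, ∀ q ∈ Q v, q.source = v)
    (hR : ∀ p : BundledPath G, p.source ∈ R → p.target ∈ R → p.source ≠ p.target →
      p.walk.length ≤ 2 * r + 1 → ¬ Disjoint p.interior M) :
    IsTopMinorModel M (2 * r + 1) (R.biUnion Q) where
  ends_mem_sym2 := by simpa using fun q v hv => (hQ v hv).ends_mem_sym2 q
  source_ne_target := by simpa using fun q v hv => (hQ v hv).source_ne_target q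
  length_le := by
    simp only [mem_biUnion]
    rintro q ⟨v, hv, hq⟩
    have := (hQ v hv).length_le q hq
    lia
  disjoint_interior := by simpa using fun q v hv => (hQ v hv).disjoint_interior q
  pairwise := by
    simp only [Set.Pairwise, mem_coe, mem_biUnion]
    rintro p ⟨v, hv, hp⟩ q ⟨w, hw, hq⟩ hpq
    obtain rfl | hvw := eq_or_ne v w
    · exact (hQ v hv).pairwise hp hq hpq
    have hpv := hsource v hv p hp
    have hqw := hsource w hw q hq
    have hp_disj := (hQ v hv).disjoint_interior p hp
    have hq_disj := (hQ w hw).disjoint_interior q hq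
    have hp_len := (hQ v hv).length_le p hp
    have hq_len := (hQ w hw).length_le q hq
    refine ⟨fun hends => ?_, disjoint_left.2 fun x hxp hxq => ?_⟩
    · obtain ⟨hs, -⟩ | ⟨-, ht⟩ := Sym2.eq_iff.1 hends
      · exact hvw (hpv ▸ hqw ▸ hs)
      · exact hR p (hpv ▸ hv) (ht ▸ hqw ▸ hw) ((hQ v hv).source_ne_target p hp) (by lia) hp_disj
    · obtain ⟨s, hsp, hsq, hs_len, hs_int⟩ := BundledPath.exists_path_of_mem_interior hxp hxq
      exact hR s (hsp ▸ hpv ▸ hv) (hsq ▸ hqw ▸ hw) (by rwa [hsp, hsq, hpv, hqw]) (by lia)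
        ((disjoint_union_left.2 ⟨hp_disj, hq_disj⟩).mono_left hs_int)

theorem exists_isTopMinorModel_card_eq_mul {V : Type} [DecidableEq V] {G : SimpleGraph V}
    {M R : Finset V} {r m : ℕ} (hRM : R ⊆ M) (hconn : ∀ v ∈ R, BConnGE G M v (r + 1) m)
    (hR : ∀ p : BundledPath G, p.source ∈ R → p.target ∈ R → p.source ≠ p.target →
      p.walk.length ≤ 2 * r + 1 → ¬ Disjoint p.interior M) :
    ∃ Q : Finset (BundledPath G), IsTopMinorModel M (2 * r + 1) Q ∧ #Q = #R * m := by
  classical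
  choose! Q hQ hsource hcard using fun v hv => (hconn v hv).exists_isTopMinorModel (hRM hv)
  refine ⟨R.biUnion Q, isTopMinorModel_biUnion_of_source_eq hQ hsource hR, ?_⟩
  rw [card_biUnion, sum_const_nat hcard]
  exact fun v hv w hw hvw => disjoint_left.2 fun q hqv hqw =>
    hvw ((hsource v hv q hqv).symm.trans (hsource w hw q hqw))

theorem le_of_bConnGE_of_forall_isTopMinorModel_card_le {V : Type} [DecidableEq V]
    {G : SimpleGraph V} {r d m : ℕ} {S : Finset V} (hS : S.Nonempty)
    (hconn : ∀ v ∈ S, BConnGE G S v (r + 1) m)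
    (hsparse : ∀ (B : Finset V) (P : Finset (BundledPath G)),
      IsTopMinorModel B (2 * r + 1) P → #P ≤ d * #B) :
    m ≤ (2 * d + 1) * d * (1 + 2 * r * d) := by
  obtain ⟨P, hP⟩ := exists_maximalFor_isTopMinorModel G S (2 * r + 1) (hsparse S)
  obtain ⟨R, hRS, hind, hcardR⟩ := hP.1.exists_subset_independent hsparse
  set M := S ∪ P.biUnion BundledPath.interior
  have hSM : S ⊆ M := subset_union_left
  have hR : ∀ p : BundledPath G, p.source ∈ R → p.target ∈ R → p.source ≠ p.target →
      p.walk.length ≤ 2 * r + 1 → ¬ Disjoint p.interior M := by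
    intro p hs ht hne hlen hdisj
    obtain ⟨q, hq, hqp⟩ := IsTopMinorModel.exists_ends_eq_of_maximalFor hP
      (by simp [BundledPath.ends, hRS hs, hRS ht]) hne hlen hdisj
    obtain ⟨hqs, hqt⟩ | ⟨hqs, hqt⟩ := Sym2.eq_iff.1 hqp
    · exact hind q hq (hqs ▸ hs) (hqt ▸ ht)
    · exact hind q hq (hqs ▸ ht) (hqt ▸ hs)
  obtain ⟨Q, hQ, hcardQ⟩ := exists_isTopMinorModel_card_eq_mul (hRS.trans hSM)
    (fun v hv => (hconn v (hRS hv)).mono_set (coe_subset.2 hSM)) hR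
  have hcardM : #M ≤ (1 + 2 * r * d) * #S := calc
    #M ≤ #S + #P * (2 * r) := hP.1.card_union_biUnion_interior_le
    _ ≤ #S + d * #S * (2 * r) := by gcongr; exact hsparse S P hP.1
    _ = (1 + 2 * r * d) * #S := by ring
  refine Nat.le_of_mul_le_mul_left ?_ hS.card_pos
  calc #S * m ≤ (2 * d + 1) * #R * m := by gcongr
    _ = (2 * d + 1) * #Q := by rw [hcardQ, mul_assoc]
    _ ≤ (2 * d + 1) * (d * ((1 + 2 * r * d) * #S)) := by
      gcongr
      exact (hsparse M Q hQ).trans (Nat.mul_le_mul_left d hcardM)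
    _ = #S * ((2 * d + 1) * d * (1 + 2 * r * d)) := by ring

theorem stmt2_general {V : Type} (G : SimpleGraph V) (r d : ℕ) (hr : 1 ≤ r) (S : Set V)
    (hfin : S.Finite) (hS : S.Nonempty) (hb : ∀ v ∈ S, 6 * r * d ^ 3 < bconn G S v r) :
    HasDepthTopMinorDensityGT G (r - 1) (d : ℝ) := by
  classical
  obtain ⟨r, rfl⟩ := Nat.exists_eq_add_of_le' hr
  lift S to Finset V using hfin
  by_contra hminor
  have hsparse : ∀ (B : Finset V) (P : Finset (BundledPath G)),
      IsTopMinorModel B (2 * r + 1) P → #P ≤ d * #B := fun B P hP => by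
    by_contra! hlt
    exact hminor (hP.hasDepthTopMinorDensityGT d.cast_nonneg (by exact_mod_cast hlt))
  have hle := le_of_bConnGE_of_forall_isTopMinorModel_card_le hS
    (fun v hv => bConnGE_of_lt_bconn (hb v hv)) hsparse
  have hbound : (2 * d + 1) * d * (1 + 2 * r * d) ≤ 6 * (r + 1) * d ^ 3 := by
    obtain rfl | hd := Nat.eq_zero_or_pos d
    · simp
    calc (2 * d + 1) * d * (1 + 2 * r * d) ≤ (2 * d + d) * d * (2 * d + 2 * r * d) := by
          gcongr <;> lia
      _ = 6 * (r + 1) * d ^ 3 := by ring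
  lia

/-- If every vertex of a nonempty set `S` has back-connectivity `bconn_r(S,·)` larger than
`6rd³`, then `G` admits a depth-`(r−1)` topological minor with edge density larger than `d`. -/
theorem stmt2 {V : Type} [Fintype V] (G : SimpleGraph V) (r d : ℕ) (hr : 1 ≤ r) (hd : 1 ≤ d)
    (S : Set V) (hS : S.Nonempty)
    (hb : ∀ v ∈ S, 6 * r * d ^ 3 < bconn G S v r) :
    HasDepthTopMinorDensityGT G (r - 1) (d : ℝ) :=
  stmt2_general G r d hr S S.toFinite hS hb
end

section
/- Let ε > 0 be a real number, let r ≥ 1 and d ≥ 1 be integers, let G be a finite simple graph, and let S be a nonempty subset of V(G) such that at least ε·|S| vertices v ∈ S satisfy bconn_r(S,v) > 6ε⁻¹rd³. Then G admits a depth-(r−1) topological minor with edge density strictly larger than d. -/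
/-!
Suppose every depth-`(r - 1)` topological minor has density at most `d`, and let `A ⊆ S` consist of
the vertices of large back-connectivity. Choose a maximal family of paths of length at most
`2r - 1` that subdivide distinct edges on the vertex set `S`, with interiors disjoint from `S` and
from one another. It is a depth-`(r - 1)` topological minor, so it has at most `d|S|` members, and
`S` together with their interiors is a set `N` of at most `(1 + 2(r - 1)d)|S|` vertices. The members
with both ends in `A` again form such a minor, so there are at most `d|A|` of them, and Turán's
bound gives a `J ⊆ A` with `|A| ≤ (2d + 1)|J|` that contains both ends of none.

Cut each path of the fan at a vertex of `J` when it first hits `N`. If two such paths from different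
vertices of `J` met outside `N`, or one of them ended in `J`, we would obtain a path of length at
most `2r - 1` avoiding `N` inside and joining two vertices of `J`, against maximality. Hence the
cut fans subdivide `|J|k` distinct edges on `N`, where `k` is the back-connectivity, so that
`|J|k ≤ d|N|`, which is false for `k > 6ε⁻¹rd³`.
-/

open SimpleGraph Set

section Turan

variable {W : Type*} [Fintype W] (H : SimpleGraph W) [DecidableRel H.Adj]

lemma two_mul_card_edgeFinset_add_compl [DecidableEq W] :
    2 * (H.edgeFinset.card + Hᶜ.edgeFinset.card) + Fintype.card W = Fintype.card W ^ 2 := by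
  have degree_add_compl (v : W) : H.degree v + Hᶜ.degree v + 1 = Fintype.card W := by
    have := H.degree_lt_card_verts v
    rw [degree_compl]
    omega
  calc
    _ = ∑ v, (H.degree v + Hᶜ.degree v + 1) := by
      simp only [Finset.sum_add_distrib, sum_degrees_eq_twice_card_edges, Finset.sum_const,
        Finset.card_univ, smul_eq_mul, mul_one, mul_add]
    _ = Fintype.card W ^ 2 := by
      simp only [degree_add_compl, Finset.sum_const, Finset.card_univ, smul_eq_mul, sq]

variable {H} in
lemma two_mul_card_edgeFinset_le_of_cliqueFree {s : ℕ} (hs : 0 < s)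
    (hH : H.CliqueFree (s + 1)) :
    2 * s * H.edgeFinset.card ≤ (s - 1) * Fintype.card W ^ 2 := by
  obtain ⟨M, _, hM⟩ := exists_isTuranMaximal (V := W) hs
  obtain ⟨e⟩ := hM.nonempty_iso_turanGraph
  calc
    _ ≤ 2 * s * M.edgeFinset.card := Nat.mul_le_mul_left _ (hM.2 hH)
    _ = 2 * s * (turanGraph (Fintype.card W) s).edgeFinset.card := by rw [e.card_edgeFinset_eq]
    _ ≤ _ := mul_card_edgeFinset_turanGraph_le

theorem card_sq_le_mul_indepNum :
    Fintype.card W ^ 2 ≤ (2 * H.edgeFinset.card + Fintype.card W) * H.indepNum := by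
  classical
  rcases isEmpty_or_nonempty W with _ | ⟨⟨w⟩⟩
  · simp
  have indepNum_pos : 0 < H.indepNum :=
    Nat.lt_of_lt_of_le Nat.one_pos <|
      IsIndepSet.card_le_indepNum (G := H) (t := {w}) (by simp [IsIndepSet])
  have compl_cliqueFree : Hᶜ.CliqueFree (H.indepNum + 1) := fun s hs => by
    have hs' := (isNIndepSet_iff _ _ _).1 ((isNClique_compl _).1 hs)
    have := hs'.1.card_le_indepNum
    omega
  have turan := two_mul_card_edgeFinset_le_of_cliqueFree indepNum_pos compl_cliqueFree
  have edges_add := two_mul_card_edgeFinset_add_compl H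
  obtain ⟨a, ha⟩ := Nat.exists_eq_add_one.2 indepNum_pos
  rw [ha, Nat.add_sub_cancel] at turan
  rw [ha]
  nlinarith

end Turan

section Link

variable {V : Type*} {G : SimpleGraph V}

/-- A path of `G` between two distinct vertices, serving as a subdivided edge of a topological
minor. The orientation from `src` to `tgt` carries no meaning there. -/
structure Link (G : SimpleGraph V) where
  src : V
  tgt : V
  walk : G.Walk src tgt
  isPath : walk.IsPath
  src_ne_tgt : src ≠ tgt

namespace Link

/-- The unordered pair of end vertices: the edge of the minor that the link subdivides. -/
def ends (p : Link G) : Sym2 V := s(p.src, p.tgt)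

/-- The internal vertices of the link. -/
def inner (p : Link G) : Set V := {w | w ∈ p.walk.support ∧ w ∉ p.ends}

lemma not_isDiag_ends (p : Link G) : ¬p.ends.IsDiag := p.src_ne_tgt

lemma inner_eq_sdiff (p : Link G) : p.inner = {w | w ∈ p.walk.support} \ {p.src, p.tgt} := by
  ext w
  simp [inner, ends]

lemma ncard_inner (p : Link G) : p.inner.ncard = p.walk.length - 1 := by
  classical
  have hsupport : {w | w ∈ p.walk.support} = (p.walk.support.toFinset : Set V) := by
    ext w; simp
  have hsub : ({p.src, p.tgt} : Set V) ⊆ {w | w ∈ p.walk.support} := by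
    rintro w (rfl | rfl) <;> simp
  rw [inner_eq_sdiff, ncard_sdiff hsub, ncard_pair p.src_ne_tgt, hsupport, ncard_coe_finset,
    List.toFinset_card_of_nodup p.isPath.support_nodup, Walk.length_support]
  omega

lemma exists_isPath_of_ends_eq (p : Link G) {x y : V} (h : p.ends = s(x, y)) :
    ∃ q : G.Walk x y, q.IsPath ∧ q.length = p.walk.length ∧
      ∀ w, w ∈ q.support ↔ w ∈ p.walk.support := by
  obtain ⟨u, v, q, hq, _⟩ := p
  rcases Sym2.eq_iff.1 h with ⟨rfl, rfl⟩ | ⟨rfl, rfl⟩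
  · exact ⟨q, hq, rfl, fun _ => Iff.rfl⟩
  · exact ⟨q.reverse, hq.reverse, q.length_reverse, fun w => by simp⟩

lemma exists_subset_of_walk {x y : V} (hxy : x ≠ y) (q : G.Walk x y) :
    ∃ p : Link G, p.ends = s(x, y) ∧ p.walk.length ≤ q.length ∧
      ∀ w ∈ p.walk.support, w ∈ q.support := by
  classical
  exact ⟨⟨x, y, q.bypass, q.bypass_isPath, hxy⟩, rfl, q.length_bypass_le_length,
    fun _ hw => q.support_bypass_subset_support hw⟩

lemma exists_initial_walk (p : Link G) {w : V} (hw : w ∈ p.inner) :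
    ∃ q : G.Walk p.src w, q.length < p.walk.length ∧ ∀ z ∈ q.support, z ≠ p.src → z ∈ p.inner := by
  classical
  obtain ⟨hw_mem, hw_ends⟩ := hw
  have hw_ne : w ≠ p.tgt := fun h => hw_ends (by simp [ends, h])
  have tgt_notMem := Walk.endpoint_notMem_support_takeUntil p.isPath hw_mem hw_ne.symm
  refine ⟨p.walk.takeUntil w hw_mem, p.walk.length_takeUntil_lt_length hw_mem hw_ne,
    fun z hz hz_src => ⟨p.walk.support_takeUntil_subset_support hw_mem hz, ?_⟩⟩
  rintro hz_ends
  rcases Sym2.mem_iff.1 hz_ends with rfl | rfl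
  · exact hz_src rfl
  · exact tgt_notMem hz

lemma exists_of_mem_inner {p q : Link G} (hsrc : p.src ≠ q.src) {w : V} (hp : w ∈ p.inner)
    (hq : w ∈ q.inner) :
    ∃ m : Link G, m.ends = s(p.src, q.src) ∧
      m.walk.length ≤ (p.walk.length - 1) + (q.walk.length - 1) ∧ m.inner ⊆ p.inner ∪ q.inner := by
  obtain ⟨p', hp'_length, hp'_inner⟩ := p.exists_initial_walk hp
  obtain ⟨q', hq'_length, hq'_inner⟩ := q.exists_initial_walk hq
  obtain ⟨m, hm_ends, hm_length, hm_support⟩ := exists_subset_of_walk hsrc (p'.append q'.reverse)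
  refine ⟨m, hm_ends, ?_, fun z hz => ?_⟩
  · rw [Walk.length_append, Walk.length_reverse] at hm_length
    omega
  · obtain ⟨hz_mem, hz_ends⟩ := hz
    rw [hm_ends, Sym2.mem_iff, not_or] at hz_ends
    rcases (Walk.mem_support_append_iff _ _).1 (hm_support z hz_mem) with h | h
    · exact Or.inl (hp'_inner z h hz_ends.1)
    · exact Or.inr (hq'_inner z (by simpa using h) hz_ends.2)

end Link

/-- A set of links of length at most `ℓ` forming a topological minor model with roots in `B`: the
links join distinct pairs of vertices of `B`, and their interiors avoid `B` and one another. -/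
structure IsLinkage (G : SimpleGraph V) (B : Set V) (ℓ : ℕ) (L : Set (Link G)) : Prop where
  length_le : ∀ p ∈ L, p.walk.length ≤ ℓ
  ends_mem : ∀ p ∈ L, p.ends ∈ B.sym2
  disjoint_inner : ∀ p ∈ L, Disjoint p.inner B
  injOn_ends : L.InjOn Link.ends
  pairwiseDisjoint_inner : L.PairwiseDisjoint Link.inner

/-- The graph whose edges are the pairs of vertices joined by a link of `L`. -/
def linkGraph (L : Set (Link G)) : SimpleGraph V := fromEdgeSet (Link.ends '' L)

/-- All vertices that a linkage `L` with roots in `B` forbids to a further link. -/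
def linkageVerts (B : Set V) (L : Set (Link G)) : Set V := B ∪ ⋃ p ∈ L, p.inner

lemma edgeSet_linkGraph (L : Set (Link G)) : (linkGraph L).edgeSet = Link.ends '' L := by
  rw [linkGraph, edgeSet_fromEdgeSet, sdiff_eq_left, Set.disjoint_left]
  rintro _ ⟨p, _, rfl⟩
  exact p.not_isDiag_ends

lemma linkGraph_adj_of_mem {L : Set (Link G)} {p : Link G} (hp : p ∈ L) :
    (linkGraph L).Adj p.src p.tgt := by
  rw [← mem_edgeSet, edgeSet_linkGraph]
  exact mem_image_of_mem _ hp

lemma sym2_mk_ne_of_lt {ι : Type*} [Preorder ι] {a b a' b' : ι} (hab : a < b) (hab' : a' < b')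
    (hne : (a, b) ≠ (a', b')) : s(a, b) ≠ s(a', b') := fun h => by
  rcases Sym2.eq_iff.1 h with ⟨rfl, rfl⟩ | ⟨rfl, rfl⟩
  · exact hne rfl
  · exact hab.asymm hab'

lemma finite_sym2 {B : Set V} (hB : B.Finite) : B.sym2.Finite := by
  rw [sym2_eq_mk_image]
  exact (hB.prod hB).image _

namespace IsLinkage

variable {B : Set V} {ℓ : ℕ} {L : Set (Link G)}

lemma finite (h : IsLinkage G B ℓ L) (hB : B.Finite) : L.Finite :=
  .of_injOn h.ends_mem h.injOn_ends (finite_sym2 hB)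

lemma restrict (h : IsLinkage G B ℓ L) {A : Set V} (hA : A ⊆ B) :
    IsLinkage G A ℓ {p ∈ L | p.ends ∈ A.sym2} where
  length_le p hp := h.length_le p hp.1
  ends_mem _ hp := hp.2
  disjoint_inner p hp := (h.disjoint_inner p hp.1).mono_right hA
  injOn_ends := h.injOn_ends.mono (sep_subset _ _)
  pairwiseDisjoint_inner := h.pairwiseDisjoint_inner.subset (sep_subset _ _)

lemma insert (h : IsLinkage G B ℓ L) {p : Link G} (hlength : p.walk.length ≤ ℓ)
    (hends : p.ends ∈ B.sym2) (hinner : Disjoint p.inner (linkageVerts B L))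
    (hnew : p.ends ∉ Link.ends '' L) : IsLinkage G B ℓ (insert p L) := by
  have hp : p ∉ L := fun hp => hnew (mem_image_of_mem _ hp)
  rw [linkageVerts, disjoint_union_right, disjoint_iUnion₂_right] at hinner
  exact
    { length_le := forall_mem_insert.2 ⟨hlength, h.length_le⟩
      ends_mem := forall_mem_insert.2 ⟨hends, h.ends_mem⟩
      disjoint_inner := forall_mem_insert.2 ⟨hinner.1, h.disjoint_inner⟩
      injOn_ends := (injOn_insert hp).2 ⟨h.injOn_ends, hnew⟩
      pairwiseDisjoint_inner :=
        (pairwiseDisjoint_insert_of_notMem hp).2 ⟨h.pairwiseDisjoint_inner, hinner.2⟩ }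

lemma range {ι : Type*} {F : ι → Link G} (hlength : ∀ i, (F i).walk.length ≤ ℓ)
    (hends : ∀ i, (F i).ends ∈ B.sym2) (hinner : ∀ i, Disjoint (F i).inner B)
    (hinj : Function.Injective (Link.ends ∘ F))
    (hdisj : Pairwise fun i j => Disjoint (F i).inner (F j).inner) :
    IsLinkage G B ℓ (range F) where
  length_le := forall_mem_range.2 hlength
  ends_mem := forall_mem_range.2 hends
  disjoint_inner := forall_mem_range.2 hinner
  injOn_ends := hinj.injOn_range
  pairwiseDisjoint_inner := by
    rintro _ ⟨i, rfl⟩ _ ⟨j, rfl⟩ hij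
    exact hdisj (ne_of_apply_ne F hij)

lemma ncard_linkageVerts_le (h : IsLinkage G B ℓ L) (hB : B.Finite) :
    (linkageVerts B L).ncard ≤ B.ncard + L.ncard * (ℓ - 1) := by
  have hinner : (⋃ p ∈ L, p.inner).ncard ≤ L.ncard * (ℓ - 1) := by
    have hL := h.finite hB
    calc (⋃ p ∈ L, p.inner).ncard
        = (⋃ p ∈ hL.toFinset, p.inner).ncard := by simp only [hL.mem_toFinset]
      _ ≤ ∑ p ∈ hL.toFinset, p.inner.ncard := Finset.set_ncard_biUnion_le _ _
      _ ≤ hL.toFinset.card • (ℓ - 1) := Finset.sum_le_card_nsmul _ _ _ fun p hp => by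
          rw [p.ncard_inner]
          exact Nat.sub_le_sub_right (h.length_le p (hL.mem_toFinset.1 hp)) 1
      _ = L.ncard * (ℓ - 1) := by rw [smul_eq_mul, ncard_eq_toFinset_card L hL]
  exact (ncard_union_le _ _).trans (Nat.add_le_add_left hinner _)

lemma finite_linkageVerts (h : IsLinkage G B ℓ L) (hB : B.Finite) :
    (linkageVerts B L).Finite := by
  refine hB.union ((h.finite hB).biUnion fun p _ => ?_)
  exact p.walk.support.finite_toSet.subset fun _ hw => hw.1

lemma ncard_edgeSet_comap_linkGraph (h : IsLinkage G B ℓ L) {ι : Type*} (f : ι ↪ V) :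
    ((linkGraph L).comap f).edgeSet.ncard = {p ∈ L | p.ends ∈ (Set.range f).sym2}.ncard := by
  have himage : Sym2.map f '' ((linkGraph L).comap f).edgeSet =
      Link.ends '' {p ∈ L | p.ends ∈ (Set.range f).sym2} := by
    have hpre : ((linkGraph L).comap f).edgeSet = Sym2.map f ⁻¹' (Link.ends '' L) := by
      rw [← edgeSet_linkGraph]
      ext ⟨a, b⟩
      simp
    rw [hpre, image_preimage_eq_inter_range, ← image_univ, ← sym2_univ, ← sym2_image, image_univ]
    exact (image_inter_preimage _ _ _).symm
  rw [← ncard_image_of_injective _ (Sym2.map.injective f.injective), himage,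
    (h.injOn_ends.mono (sep_subset _ _)).ncard_image]

end IsLinkage

lemma exists_maximal_isLinkage (G : SimpleGraph V) {B : Set V} (hB : B.Finite) (ℓ : ℕ) :
    ∃ L, IsLinkage G B ℓ L ∧ ∀ p : Link G, p.walk.length ≤ ℓ → p.ends ∈ B.sym2 →
      Disjoint p.inner (linkageVerts B L) → p.ends ∈ Link.ends '' L := by
  have hfin : ((Link.ends '' ·) '' {L | IsLinkage G B ℓ L}).Finite :=
    (finite_sym2 hB).finite_subsets.subset <| by
      rintro _ ⟨L, hL, rfl⟩
      exact image_subset_iff.2 hL.ends_mem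
  obtain ⟨L, hL, hmax⟩ := Finite.exists_maximalFor' (Link.ends '' ·) _ hfin
    ⟨∅, by constructor <;> simp⟩
  refine ⟨L, hL, fun p hlength hends hinner => by_contra fun hnew => hnew ?_⟩
  exact hmax (hL.insert hlength hends hinner hnew) (image_mono (subset_insert p L))
    (mem_image_of_mem _ (mem_insert p L))

/-- Every linkage with finitely many roots and links of length at most `ℓ` has at most `d` links
per root. For `ℓ = 2 * r + 1` this holds as soon as no depth-`r` topological minor of `G` has
density larger than `d`. -/
def IsLinkageSparse (G : SimpleGraph V) (ℓ : ℕ) (d : ℝ) : Prop :=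
  ∀ ⦃B : Set V⦄ ⦃L : Set (Link G)⦄, B.Finite → IsLinkage G B ℓ L → (L.ncard : ℝ) ≤ d * B.ncard

/-- No link of length at most `ℓ` with interior outside `N` joins two vertices of `J`. -/
def IsLinkSeparated (G : SimpleGraph V) (N : Set V) (ℓ : ℕ) (J : Set V) : Prop :=
  ∀ p : Link G, p.walk.length ≤ ℓ → p.ends ∈ J.sym2 → ¬Disjoint p.inner N

namespace IsLinkage

variable {B : Set V} {ℓ : ℕ} {L : Set (Link G)}

lemma exists_isPath_of_adj (h : IsLinkage G B ℓ L) {x y : V} (hxy : (linkGraph L).Adj x y) :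
    ∃ p ∈ L, p.ends = s(x, y) ∧ ∃ q : G.Walk x y, q.IsPath ∧ q.length ≤ ℓ ∧
      ∀ w ∈ q.support, w ≠ x → w ≠ y → w ∈ p.inner := by
  obtain ⟨p, hp, hp_ends⟩ := ((fromEdgeSet_adj _).1 hxy).1
  obtain ⟨q, hq, hq_length, hq_support⟩ := p.exists_isPath_of_ends_eq hp_ends
  refine ⟨p, hp, hp_ends, q, hq, hq_length.trans_le (h.length_le p hp), fun w hw hwx hwy =>
    ⟨(hq_support w).1 hw, ?_⟩⟩
  rw [hp_ends, Sym2.mem_iff]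
  tauto

lemma exists_disjoint_walks (h : IsLinkage G B ℓ L) :
    ∃ P : ∀ x y, (linkGraph L).Adj x y → G.Walk x y,
      (∀ x y hxy, (P x y hxy).IsPath ∧ (P x y hxy).length ≤ ℓ) ∧
      (∀ x y hxy, ∀ w ∈ (P x y hxy).support, w ≠ x → w ≠ y → w ∉ B) ∧
      ∀ x y hxy x' y' hxy', s(x, y) ≠ s(x', y') →
        ∀ w ∈ (P x y hxy).support, w ∈ (P x' y' hxy').support → w = x ∨ w = y := by
  choose p hpL hp_ends P hP hP_length hP_support using
    fun x y (hxy : (linkGraph L).Adj x y) => h.exists_isPath_of_adj hxy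
  have inner_notMem {x y : V} (hxy) {w : V} (hw : w ∈ (p x y hxy).inner) : w ∉ B :=
    Set.disjoint_left.1 (h.disjoint_inner _ (hpL x y hxy)) hw
  refine ⟨P, fun x y hxy => ⟨hP x y hxy, hP_length x y hxy⟩,
    fun x y hxy w hw hwx hwy => inner_notMem hxy (hP_support x y hxy w hw hwx hwy), ?_⟩
  intro x y hxy x' y' hxy' hne w hw hw'
  by_contra! hw_ends
  have hw_inner := hP_support x y hxy w hw hw_ends.1 hw_ends.2
  have ends_mem : s(x', y') ∈ B.sym2 := hp_ends x' y' hxy' ▸ h.ends_mem _ (hpL x' y' hxy')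
  have hw_inner' : w ∈ (p x' y' hxy').inner :=
    hP_support x' y' hxy' w hw' (fun hwx' => inner_notMem hxy hw_inner (hwx' ▸ ends_mem.1))
      fun hwy' => inner_notMem hxy hw_inner (hwy' ▸ ends_mem.2)
  have hpp' : p x y hxy = p x' y' hxy' :=
    h.pairwiseDisjoint_inner.elim_set (hpL x y hxy) (hpL x' y' hxy') w hw_inner hw_inner'
  exact hne (by rw [← hp_ends x y hxy, ← hp_ends x' y' hxy', hpp'])

lemma exists_independent (h : IsLinkage G B ℓ L) {A : Set V} (hA : A.Finite) {d : ℝ}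
    (hd : ({p ∈ L | p.ends ∈ A.sym2}.ncard : ℝ) ≤ d * A.ncard) :
    ∃ J ⊆ A, (A.ncard : ℝ) ≤ (2 * d + 1) * J.ncard ∧ ∀ p ∈ L, p.ends ∉ J.sym2 := by
  classical
  rcases A.eq_empty_or_nonempty with rfl | hA_ne
  · exact ⟨∅, by simp⟩
  have hA_pos : (0 : ℝ) < A.ncard := by exact_mod_cast (ncard_pos hA).2 hA_ne
  have := hA.fintype
  let H := (linkGraph L).induce A
  have hrange : Set.range (Function.Embedding.subtype (· ∈ A)) = A := Subtype.range_coe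
  have hedges : (H.edgeFinset.card : ℝ) ≤ d * A.ncard := by
    rwa [← ncard_coe_finset, coe_edgeFinset, h.ncard_edgeSet_comap_linkGraph, hrange]
  obtain ⟨s, hs⟩ := H.exists_isNIndepSet_indepNum
  have turan : (A.ncard : ℝ) ^ 2 ≤ (2 * H.edgeFinset.card + A.ncard) * H.indepNum := by
    have := card_sq_le_mul_indepNum H
    rw [← Nat.card_eq_fintype_card, Nat.card_coe_set_eq] at this
    exact_mod_cast this
  refine ⟨(↑) '' (s : Set A), by simp, ?_, fun p hp hpJ => ?_⟩
  · rw [ncard_image_of_injective _ Subtype.val_injective, ncard_coe_finset, hs.card_eq]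
    refine le_of_mul_le_mul_left ?_ hA_pos
    calc (A.ncard : ℝ) * A.ncard ≤ (2 * H.edgeFinset.card + A.ncard) * H.indepNum := by rwa [← sq]
      _ ≤ (2 * (d * A.ncard) + A.ncard) * H.indepNum := by gcongr
      _ = A.ncard * ((2 * d + 1) * H.indepNum) := by ring
  · obtain ⟨⟨x, hx, hx_src⟩, ⟨y, hy, hy_tgt⟩⟩ := mk_mem_sym2_iff.1 hpJ
    have hxy : H.Adj x y := by
      simpa [H, hx_src, hy_tgt] using linkGraph_adj_of_mem hp
    exact hs.isIndepSet hx hy hxy.ne hxy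

end IsLinkage

lemma IsLinkageSparse.exists_isLinkSeparated {ℓ : ℕ} {d : ℝ} (hG : IsLinkageSparse G ℓ d)
    {S A : Set V} (hS : S.Finite) (hA : A ⊆ S) :
    ∃ N, N.Finite ∧ S ⊆ N ∧ (N.ncard : ℝ) ≤ (1 + d * (ℓ - 1 : ℕ)) * S.ncard ∧
      ∃ J ⊆ A, (A.ncard : ℝ) ≤ (2 * d + 1) * J.ncard ∧ IsLinkSeparated G N ℓ J := by
  obtain ⟨L, hL, hmax⟩ := exists_maximal_isLinkage G hS ℓ
  have hA_fin := hS.subset hA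
  obtain ⟨J, hJA, hJ_card, hJ⟩ := hL.exists_independent hA_fin (hG hA_fin (hL.restrict hA))
  refine ⟨linkageVerts S L, hL.finite_linkageVerts hS, subset_union_left, ?_, J, hJA, hJ_card, ?_⟩
  · calc ((linkageVerts S L).ncard : ℝ)
        ≤ S.ncard + L.ncard * (ℓ - 1 : ℕ) := by exact_mod_cast hL.ncard_linkageVerts_le hS
      _ ≤ S.ncard + d * S.ncard * (ℓ - 1 : ℕ) := by gcongr; exact hG hS hL
      _ = (1 + d * (ℓ - 1 : ℕ)) * S.ncard := by ring
  · intro p hp_length hp_ends hp_inner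
    have hJS := hJA.trans hA
    obtain ⟨q, hq, hq_ends⟩ := hmax p hp_length ⟨hJS hp_ends.1, hJS hp_ends.2⟩ hp_inner
    exact hJ q hq (hq_ends ▸ hp_ends)

end Link

section BackConnectivity

variable {V : Type} {G : SimpleGraph V}

lemma IsLinkage.hasDepthTopMinorDensityGT {B : Set V} {L : Set (Link G)} {r : ℕ} {d : ℝ}
    (h : IsLinkage G B (2 * r + 1) L) (hB : B.Finite) (hd : d * B.ncard < L.ncard) :
    HasDepthTopMinorDensityGT G r d := by
  have hB_pos : 0 < B.ncard := by
    refine (ncard_pos hB).2 (nonempty_iff_ne_empty.2 ?_)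
    rintro rfl
    have hL : L = ∅ := eq_empty_of_forall_notMem fun p hp => by simpa using h.ends_mem p hp
    simp [hL] at hd
  have := hB.to_subtype
  let e : Fin B.ncard ≃ B := (Finite.equivFinOfCardEq (Nat.card_coe_set_eq B)).symm
  let f : Fin B.ncard ↪ V := e.toEmbedding.trans (Function.Embedding.subtype _)
  have hf : Set.range f = B := (e.surjective.range_comp _).trans Subtype.range_coe
  let H := (linkGraph L).comap f
  have hH_card : H.edgeSet.ncard = L.ncard := by
    rw [h.ncard_edgeSet_comap_linkGraph, hf, sep_eq_self_iff_mem_true.2 h.ends_mem]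
  obtain ⟨P, hP, hP_notMem, hP_disj⟩ := h.exists_disjoint_walks
  refine ⟨B.ncard, H, hB_pos, ?_, f, fun a b _ hab => P (f a) (f b) hab, f.injective,
    fun a b _ hab => (hP _ _ hab).1, fun a b _ hab => (hP _ _ hab).2, ?_, ?_⟩
  · rwa [hH_card, lt_div_iff₀ (by exact_mod_cast hB_pos)]
  · rintro a b _ hadj w hw hwa hwb c rfl
    exact hP_notMem _ _ hadj _ hw hwa hwb (hf.subset (mem_range_self c))
  · intro a b hab hadj a' b' hab' hadj' hne
    have hends : s(f a, f b) ≠ s(f a', f b') :=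
      (Sym2.map.injective f.injective).ne (sym2_mk_ne_of_lt hab hab' hne)
    exact hP_disj _ _ hadj _ _ hadj' hends

lemma isLinkageSparse_of_not_hasDepthTopMinorDensityGT {r : ℕ} {d : ℝ}
    (h : ¬HasDepthTopMinorDensityGT G r d) : IsLinkageSparse G (2 * r + 1) d :=
  fun _ _ hB hL => not_lt.1 fun hd => h (hL.hasDepthTopMinorDensityGT hB hd)

lemma bConnGE_bconn (G : SimpleGraph V) (S : Set V) (u : V) (r : ℕ) :
    BConnGE G S u r (bconn G S u r) := by
  have bConnGE_zero : BConnGE G S u r 0 := by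
    refine ⟨Fin.elim0, fun i => i.elim0, ?_, ?_, ?_, ?_, ?_⟩ <;> exact fun i => i.elim0
  by_cases hbdd : BddAbove {m | BConnGE G S u r m}
  · exact Nat.sSup_mem ⟨0, bConnGE_zero⟩ hbdd
  · rwa [bconn, Nat.sSup_of_not_bddAbove hbdd]

lemma exists_isPath_first_hit {u t : V} (p : G.Walk u t) {N : Set V} (ht : t ∈ N) (htu : t ≠ u) :
    ∃ y ∈ N, y ≠ u ∧ ∃ q : G.Walk u y, q.IsPath ∧ q.length ≤ p.length ∧
      q.support ⊆ p.support ∧ ∀ w ∈ q.support, w ≠ u → w ≠ y → w ∉ N := by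
  classical
  obtain ⟨y, hyN, hy, hfirst⟩ := p.bypass.exists_mem_support_forall_mem_support_imp_eq
    (p.support.toFinset.filter fun w => w ∈ N ∧ w ≠ u) ⟨t, by simp [ht, htu]⟩
  obtain ⟨-, hyN, hyu⟩ := Finset.mem_filter.1 hyN
  have hsupport : (p.bypass.takeUntil y hy).support ⊆ p.support :=
    fun w hw => p.support_bypass_subset_support (p.bypass.support_takeUntil_subset_support hy hw)
  refine ⟨y, hyN, hyu, p.bypass.takeUntil y hy, p.bypass_isPath.takeUntil hy,
    (p.bypass.length_takeUntil_le_length hy).trans p.length_bypass_le_length, hsupport,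
    fun w hw hwu hwy hwN => hwy (hfirst w ?_ hw)⟩
  simp [hsupport hw, hwN, hwu]

namespace BConnGE

variable {S N : Set V} {v : V} {r k : ℕ}

lemma mono_right {m : ℕ} (h : BConnGE G S v r m) (hk : k ≤ m) : BConnGE G S v r k := by
  obtain ⟨t, P, hpath, hlength, ht, hinner, hdisj⟩ := h
  exact ⟨t ∘ Fin.castLE hk, fun i => P (Fin.castLE hk i), fun i => hpath _, fun i => hlength _,
    fun i => ht _, fun i => hinner _,
    fun i j hij => hdisj _ _ ((Fin.castLE_injective hk).ne hij)⟩

lemma mono_set_s3 (h : BConnGE G S v r k) (hSN : S ⊆ N) : BConnGE G N v r k := by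
  obtain ⟨t, P, -, hlength, ht, -, hdisj⟩ := h
  choose y hyN hyv q hq hq_length hq_support hq_inner using fun i =>
    exists_isPath_first_hit (P i) (hSN (ht i).1) (ht i).2
  exact ⟨y, q, hq, fun i => (hq_length i).trans (hlength i), fun i => ⟨hyN i, hyv i⟩, hq_inner,
    fun i j hij w hwi hwj => hdisj i j hij w (hq_support i hwi) (hq_support j hwj)⟩

lemma exists_links (h : BConnGE G N v r k) :
    ∃ F : Fin k → Link G, (∀ i, (F i).src = v) ∧ (∀ i, (F i).tgt ∈ N) ∧
      (∀ i, (F i).walk.length ≤ r) ∧ (∀ i, Disjoint (F i).inner N) ∧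
      Pairwise fun i j => (F i).tgt ≠ (F j).tgt ∧ Disjoint (F i).inner (F j).inner := by
  obtain ⟨t, P, hpath, hlength, ht, hinner, hdisj⟩ := h
  refine ⟨fun i => ⟨v, t i, P i, hpath i, (ht i).2.symm⟩, fun _ => rfl, fun i => (ht i).1, hlength,
    fun i => ?_, fun i j hij => ⟨fun hij_tgt => ?_, ?_⟩⟩
  · refine Set.disjoint_left.2 fun w ⟨hw, hw_ends⟩ => ?_
    rw [Link.ends, Sym2.mem_iff, not_or] at hw_ends
    exact hinner i w hw hw_ends.1 hw_ends.2
  · have hti : t i ∈ (P j).support := by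
      rw [show t i = t j from hij_tgt]
      exact (P j).end_mem_support
    exact (ht i).2 (hdisj i j hij (t i) (P i).end_mem_support hti)
  · refine Set.disjoint_left.2 fun w hwi hwj => hwi.2 ?_
    exact Sym2.mem_iff.2 (Or.inl (hdisj i j hij w hwi.1 hwj.1))

end BConnGE

lemma IsLinkSeparated.exists_isLinkage {N J : Set V} {r k : ℕ}
    (hJ : IsLinkSeparated G N (2 * (r - 1) + 1) J) (hJN : J ⊆ N)
    (hfan : ∀ v ∈ J, BConnGE G N v r k) :
    ∃ L, IsLinkage G N (2 * (r - 1) + 1) L ∧ L.ncard = J.ncard * k := by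
  choose F hsrc htgt hlength hinner hfan using fun v : J => (hfan v v.2).exists_links
  have hlength' (v i) : (F v i).walk.length ≤ 2 * (r - 1) + 1 := (hlength v i).trans (by omega)
  have tgt_notMem (v i) : (F v i).tgt ∉ J := fun htJ =>
    hJ (F v i) (hlength' v i) ⟨hsrc v i ▸ v.2, htJ⟩ (hinner v i)
  have hdisj {v v' : J} (hv : v ≠ v') (i i') : Disjoint (F v i).inner (F v' i').inner := by
    refine Set.disjoint_left.2 fun w hw hw' => ?_
    have hsrc_ne : (F v i).src ≠ (F v' i').src := by
      rw [hsrc, hsrc]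
      exact Subtype.coe_ne_coe.2 hv
    obtain ⟨m, hm_ends, hm_length, hm_inner⟩ := Link.exists_of_mem_inner hsrc_ne hw hw'
    refine hJ m ?_ ?_ (((hinner v i).union_left (hinner v' i')).mono_left hm_inner)
    · have := hlength v i
      have := hlength v' i'
      omega
    · rw [hm_ends, hsrc, hsrc]
      exact ⟨v.2, v'.2⟩
  have hinj : Function.Injective (Link.ends ∘ fun c : J × Fin k => F c.1 c.2) := by
    rintro ⟨v, i⟩ ⟨v', i'⟩ hends
    rcases Sym2.eq_iff.1 hends with ⟨hs, ht⟩ | ⟨hs, -⟩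
    · simp only [hsrc] at hs
      obtain rfl := Subtype.ext hs
      exact congrArg _ (by_contra fun hi => (hfan v hi).1 ht)
    · simp only [hsrc] at hs
      exact absurd (hs ▸ v.2) (tgt_notMem v' i')
  refine ⟨Set.range fun c : J × Fin k => F c.1 c.2,
    .range (fun c => hlength' _ _) (fun c => ⟨hJN (hsrc c.1 c.2 ▸ c.1.2), htgt _ _⟩)
      (fun c => hinner _ _) hinj ?_, ?_⟩
  · rintro ⟨v, i⟩ ⟨v', i'⟩ hc
    by_cases hv : v = v'
    · subst hv
      exact (hfan v fun hi => hc (congrArg _ hi)).2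
    · exact hdisj hv i i'
  · rw [ncard_range_of_injective hinj.of_comp, Nat.card_prod, Nat.card_coe_set_eq, Nat.card_fin]

theorem IsLinkageSparse.ncard_mul_le {r k : ℕ} {d : ℝ} (hd : 0 ≤ d)
    (hG : IsLinkageSparse G (2 * (r - 1) + 1) d) {S A : Set V} (hS : S.Finite) (hA : A ⊆ S)
    (hfan : ∀ v ∈ A, BConnGE G S v r k) :
    (A.ncard : ℝ) * k ≤ (2 * d + 1) * (d * ((1 + d * (2 * (r - 1 : ℕ))) * S.ncard)) := by
  obtain ⟨N, hN, hSN, hN_card, J, hJA, hJ_card, hJ⟩ := hG.exists_isLinkSeparated hS hA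
  obtain ⟨L, hL, hL_card⟩ := hJ.exists_isLinkage (hJA.trans (hA.trans hSN))
    fun v hv => (hfan v (hJA hv)).mono_set_s3 hSN
  rw [Nat.add_sub_cancel] at hN_card
  calc (A.ncard : ℝ) * k ≤ (2 * d + 1) * J.ncard * k := by gcongr
    _ = (2 * d + 1) * L.ncard := by rw [hL_card, Nat.cast_mul, mul_assoc]
    _ ≤ (2 * d + 1) * (d * N.ncard) := by gcongr; exact hG hN hL
    _ ≤ (2 * d + 1) * (d * ((1 + d * (2 * (r - 1 : ℕ))) * S.ncard)) := by
      gcongr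
      exact_mod_cast hN_card

end BackConnectivity

theorem stmt3_general {V : Type} (G : SimpleGraph V) {ε : ℝ} (hε : 0 < ε) {r : ℕ} (hr : 1 ≤ r)
    {d : ℝ} (hd : 1 ≤ d) {S : Set V} (hS_fin : S.Finite) (hS : S.Nonempty)
    (hb : ε * (S.ncard : ℝ) ≤
      (({v ∈ S | 6 * ε⁻¹ * (r : ℝ) * d ^ 3 < (bconn G S v r : ℝ)}.ncard : ℝ))) :
    HasDepthTopMinorDensityGT G (r - 1) d := by
  by_contra hminor
  set x := 6 * ε⁻¹ * r * d ^ 3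
  set A := {v ∈ S | x < bconn G S v r}
  have hx : 0 ≤ x := by positivity
  have hA (v) (hv : v ∈ A) : BConnGE G S v r (⌊x⌋₊ + 1) :=
    (bConnGE_bconn G S v r).mono_right ((Nat.floor_lt hx).2 hv.2)
  have hS_pos : (0 : ℝ) < S.ncard := by exact_mod_cast (ncard_pos hS_fin).2 hS
  have hA_pos : (0 : ℝ) < A.ncard := (mul_pos hε hS_pos).trans_le hb
  have hsparse := isLinkageSparse_of_not_hasDepthTopMinorDensityGT hminor
  have hupper : (A.ncard : ℝ) * (⌊x⌋₊ + 1 : ℕ) ≤ A.ncard * x := calc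
    _ ≤ (2 * d + 1) * (d * ((1 + d * (2 * (r - 1 : ℕ))) * S.ncard)) :=
      hsparse.ncard_mul_le (by positivity) hS_fin (sep_subset _ _) hA
    _ ≤ (3 * d) * (d * ((2 * d * r) * S.ncard)) := by
      have hr' : ((r - 1 : ℕ) : ℝ) = r - 1 := by rw [Nat.cast_sub hr, Nat.cast_one]
      gcongr
      · linarith
      · rw [hr']
        linarith
    _ = (ε * S.ncard) * x := by
      simp only [x]
      field_simp
      ring
    _ ≤ A.ncard * x := by gcongr
  have := Nat.lt_floor_add_one x
  exact hupper.not_gt (by push_cast; gcongr)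

/-- If at least `ε·|S|` vertices of a nonempty set `S` have back-connectivity
`bconn_r(S,·)` larger than `6ε⁻¹rd³`, then `G` admits a depth-`(r−1)` topological minor
with edge density larger than `d`. -/
theorem stmt3 {V : Type} [Fintype V] (G : SimpleGraph V) (ε : ℝ) (hε : 0 < ε)
    (r d : ℕ) (hr : 1 ≤ r) (hd : 1 ≤ d) (S : Set V) (hS : S.Nonempty)
    (hb : ε * (S.ncard : ℝ) ≤
      (({v ∈ S | 6 * ε⁻¹ * (r : ℝ) * (d : ℝ) ^ 3 < (bconn G S v r : ℝ)}.ncard : ℝ))) :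
    HasDepthTopMinorDensityGT G (r - 1) (d : ℝ) :=
  stmt3_general G hε hr (by exact_mod_cast hd) S.toFinite hS hb
end

section
/- Let c, r ∈ ℕ with c ≥ 2, let G be a finite simple graph, and let σ be a vertex ordering of G with adm_r(G,σ) ≤ c. Then wcol_r(G,σ) ≤ (c^{r+1} − 1)/(c − 1). -/
/-- `WReach G σ r v` is the set of vertices weakly `r`-reachable from `v` in the vertex
ordering `σ`: those `u` with `σ u ≤ σ v` admitting a path of length at most `r` from `v`
to `u` all of whose internal vertices are larger than `u` in `σ`. -/
def WReach {V : Type} (G : SimpleGraph V) (σ : V → ℕ) (r : ℕ) (v : V) : Set V :=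
  {u | σ u ≤ σ v ∧ ∃ p : G.Walk v u, p.IsPath ∧ p.length ≤ r ∧
        ∀ w ∈ p.support, w ≠ v → w ≠ u → σ u < σ w}

/-- The weak `r`-coloring number `wcol_r(G,σ)` of a vertex ordering `σ`:
the maximum over vertices `v` of `|WReach_r[G,σ,v]|`. -/
noncomputable def wcolOrd {V : Type} [Fintype V] (G : SimpleGraph V) (σ : V → ℕ) (r : ℕ) : ℕ :=
  Finset.univ.sup fun v => (WReach G σ r v).ncard

/-- The `r`-admissibility `adm_r(G,σ)` of a vertex ordering `σ` (an injective map `V → ℕ`):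
the maximum over vertices `v` of `bconn_r({u : σ u ≤ σ v}, v)`. -/
noncomputable def admOrd {V : Type} [Fintype V] (G : SimpleGraph V) (σ : V → ℕ) (r : ℕ) : ℕ :=
  Finset.univ.sup fun v => bconn G {u | σ u ≤ σ v} v r

/-!
Fix for every pair `v`, `u` the shortlex-least walk from `v` to `u` among the vertices `≥ u` (the
*canonical* walk, which exists with length at most `r` when `u` is weakly `r`-reachable from `v`).
Canonicity passes to suffixes, and two canonical walks from `v` to vertices below `v` that meet
outside `v` before descending below `v` agree up to the meeting point, since otherwise splicing
would improve one of them. Hence canonical walks of length at most `r` with distinct second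
vertices yield, truncated at their first vertex below `v`, pairwise disjoint paths as in
`bconn G {y | σ y ≤ σ v} v r`. So at most `c` second vertices `z` occur, and
`WReach (s + 1) v ⊆ {v} ∪ ⋃ z, WReach s z` turns into the geometric sum.
-/

theorem ncard_biUnion_le_ncard_mul {ι α : Type*} {I : Set ι} (hI : I.Finite) (A : ι → Set α)
    {n : ℕ} (hA : ∀ i ∈ I, (A i).ncard ≤ n) : (⋃ i ∈ I, A i).ncard ≤ I.ncard * n := by
  lift I to Finset ι using hI
  rw [Set.ncard_coe_finset]
  exact (Finset.set_ncard_biUnion_le I A).trans (I.sum_le_card_nsmul _ n hA)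

section Shortlex

variable {α : Type*} {r : α → α → Prop}

theorem lex_append_append_right {s t : List α} (h : List.Lex r s t)
    (hlen : s.length = t.length) (b : List α) : List.Lex r (s ++ b) (t ++ b) := by
  induction h with
  | nil => simp at hlen
  | cons _ ih => exact .cons (ih (by simpa using hlen))
  | rel h => exact .rel h

theorem shortlex_append_append_right {s t : List α} (h : List.Shortlex r s t) (b : List α) :
    List.Shortlex r (s ++ b) (t ++ b) := by
  rcases List.shortlex_def.mp h with hlt | ⟨heq, hlex⟩
  · exact .of_length_lt (by simpa using hlt)
  · exact .of_lex (by simpa using heq) (lex_append_append_right hlex heq b)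

end Shortlex

section CanonicalWalk

variable {V α : Type*} {G : SimpleGraph V} {σ : V → α} {u u₁ u₂ v x : V}

/-- A walk from `v` to `u` is canonical with respect to `σ` if no vertex on it is `σ`-smaller than
`u` and its sequence of vertices is shortlex-minimal among all such walks from `v` to `u`. These
walks serve as a consistent choice of witnesses for weak reachability. -/
structure IsCanonicalWalk [Preorder α] (σ : V → α) (p : G.Walk v u) : Prop where
  le : ∀ y ∈ p.support, σ u ≤ σ y
  not_shortlex : ∀ q : G.Walk v u, (∀ y ∈ q.support, σ u ≤ σ y) →
    ¬ List.Shortlex (fun a b ↦ σ a < σ b) q.support p.support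

section Preorder

variable [Preorder α]

theorem IsCanonicalWalk.isPath {p : G.Walk v u} (hp : IsCanonicalWalk σ p) : p.IsPath := by
  classical
  have hle : p.length ≤ p.bypass.length := by
    by_contra! hlt
    exact hp.not_shortlex p.bypass (fun y hy ↦ hp.le y (p.support_bypass_subset_support hy))
      (.of_length_lt (by simpa using hlt))
  rw [← p.bypass_eq_self_of_length_le_length_bypass hle]
  exact p.bypass_isPath

theorem IsCanonicalWalk.of_cons {w : V} {h : G.Adj v w} {p : G.Walk w u}
    (hp : IsCanonicalWalk σ (.cons h p)) : IsCanonicalWalk σ p where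
  le y hy := hp.le y (by simp [hy])
  not_shortlex q hq hlt := by
    refine hp.not_shortlex (.cons h q) (fun y hy ↦ ?_) (hlt.append_left [v])
    rcases List.mem_cons.mp hy with rfl | hy
    exacts [hp.le y (by simp), hq y hy]

theorem IsCanonicalWalk.not_shortlex_of_append {p q : G.Walk v x} {d : G.Walk x u}
    (hp : IsCanonicalWalk σ (p.append d)) (hq : ∀ y ∈ q.support, σ u ≤ σ y) :
    ¬ List.Shortlex (fun a b ↦ σ a < σ b) q.support p.support := by
  intro hlt
  refine hp.not_shortlex (q.append d) (fun y hy ↦ ?_) ?_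
  · rcases (SimpleGraph.Walk.mem_support_append_iff q d).mp hy with hy | hy
    exacts [hq y hy, hp.le y (p.support_subset_support_append_right d hy)]
  · simpa only [SimpleGraph.Walk.support_append] using
      shortlex_append_append_right hlt d.support.tail

theorem IsCanonicalWalk.of_append_left {p : G.Walk v x} {d : G.Walk x u}
    (hp : IsCanonicalWalk σ (p.append d)) (hx : ∀ y ∈ p.support, σ x ≤ σ y) :
    IsCanonicalWalk σ p where
  le := hx
  not_shortlex _ hq :=
    have hux : σ u ≤ σ x := hp.le x (p.support_subset_support_append_left d p.end_mem_support)
    hp.not_shortlex_of_append fun y hy ↦ hux.trans (hq y hy)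

theorem exists_isCanonicalWalk_length_le [WellFoundedLT α] {q : G.Walk v u}
    (hq : ∀ y ∈ q.support, σ u ≤ σ y) :
    ∃ p : G.Walk v u, IsCanonicalWalk σ p ∧ p.length ≤ q.length := by
  have hwf : WellFounded (List.Shortlex fun a b : V ↦ σ a < σ b) :=
    List.Shortlex.wf (InvImage.wf σ wellFounded_lt)
  obtain ⟨p, hp, hmin⟩ := (InvImage.wf SimpleGraph.Walk.support hwf).has_min
    {p : G.Walk v u | ∀ y ∈ p.support, σ u ≤ σ y} ⟨q, hq⟩
  refine ⟨p, ⟨hp, hmin⟩, ?_⟩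
  by_contra! hlt
  exact hmin q hq (List.Shortlex.of_length_lt (by simpa using hlt))

theorem le_of_mem_support_takeUntil [DecidableEq V] {p : G.Walk v u} {a : α}
    (hp : p.IsPath) (hx : x ∈ p.support) (hav : a ≤ σ v) (hax : a ≤ σ x)
    (hint : ∀ y ∈ p.support, y ≠ v → y ≠ u → a ≤ σ y) :
    ∀ y ∈ (p.takeUntil x hx).support, a ≤ σ y := by
  intro y hy
  by_cases hyx : y = x
  · exact hyx ▸ hax
  by_cases hyv : y = v
  · exact hyv ▸ hav
  have hyu : y ≠ u := by
    rintro rfl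
    exact SimpleGraph.Walk.endpoint_notMem_support_takeUntil hp hx hyx hy
  exact hint y (p.support_takeUntil_subset_support hx hy) hyv hyu

/-- The second vertices of the canonical walks of length at most `r` from `v` to another vertex;
they are the branching of the recursive description of weak reachability. -/
def canonicalSuccessors (G : SimpleGraph V) (σ : V → α) (r : ℕ) (v : V) : Set V :=
  {z | ∃ u ≠ v, ∃ p : G.Walk v u, IsCanonicalWalk σ p ∧ p.length ≤ r ∧ p.snd = z}

end Preorder

variable [LinearOrder α]

theorem IsCanonicalWalk.eq_of_append (hσ : Function.Injective σ) {p₁ p₂ : G.Walk v x}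
    {d₁ : G.Walk x u₁} {d₂ : G.Walk x u₂} (h₁ : IsCanonicalWalk σ (p₁.append d₁))
    (h₂ : IsCanonicalWalk σ (p₂.append d₂)) (hp₁ : ∀ y ∈ p₁.support, σ u₂ ≤ σ y)
    (hp₂ : ∀ y ∈ p₂.support, σ u₁ ≤ σ y) : p₁ = p₂ := by
  have : Std.Trichotomous fun a b : V ↦ σ a < σ b :=
    ⟨fun _ _ hab hba ↦ hσ (le_antisymm (not_lt.mp hba) (not_lt.mp hab))⟩
  exact SimpleGraph.Walk.ext_support <|
    (List.Shortlex.trichotomous (r := fun a b : V ↦ σ a < σ b)).trichotomous _ _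
      (h₂.not_shortlex_of_append hp₁) (h₁.not_shortlex_of_append hp₂)

theorem exists_mem_support_lt_forall_takeUntil [DecidableEq V] {p : G.Walk v u}
    (huv : σ u < σ v) :
    ∃ (t : V) (ht : t ∈ p.support), σ t < σ v ∧
      ∀ y ∈ (p.takeUntil t ht).support, y ≠ t → σ v ≤ σ y := by
  obtain ⟨t, htv, ht, hfirst⟩ :=
    p.exists_mem_support_forall_mem_support_imp_eq {y ∈ p.support.toFinset | σ y < σ v}
      ⟨u, by simp [huv]⟩
  refine ⟨t, ht, (Finset.mem_filter.mp htv).2, fun y hy hyt ↦ ?_⟩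
  by_contra! hyv
  have hyp : y ∈ p.support := p.support_takeUntil_subset_support ht hy
  exact hyt (hfirst y (by simp [hyp, hyv]) hy)

theorem IsCanonicalWalk.exists_descending (hσ : Function.Injective σ) {p : G.Walk v u}
    (hp : IsCanonicalWalk σ p) (huv : u ≠ v) :
    ∃ (t : V) (q : G.Walk v t), IsCanonicalWalk σ q ∧ q.length ≤ p.length ∧ q.snd = p.snd ∧
      σ t < σ v ∧ ∀ y ∈ q.support, y ≠ v → y ≠ t → σ v < σ y := by
  classical
  have hlt : σ u < σ v := (hp.le v p.start_mem_support).lt_of_ne (hσ.ne huv)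
  obtain ⟨t, ht, htv, hge⟩ := exists_mem_support_lt_forall_takeUntil (p := p) hlt
  refine ⟨t, p.takeUntil t ht, ?_, p.length_takeUntil_le_length ht,
    p.snd_takeUntil (ne_of_apply_ne σ htv.ne) ht, htv,
    fun y hy hyv hyt ↦ (hge y hy hyt).lt_of_ne (hσ.ne hyv.symm)⟩
  refine IsCanonicalWalk.of_append_left (d := p.dropUntil t ht) (by rwa [p.take_spec ht])
    fun y hy ↦ ?_
  rcases eq_or_ne y t with rfl | hyt
  exacts [le_rfl, htv.le.trans (hge y hy hyt)]

theorem IsCanonicalWalk.snd_eq_snd (hσ : Function.Injective σ) {p₁ : G.Walk v u₁}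
    {p₂ : G.Walk v u₂} (h₁ : IsCanonicalWalk σ p₁) (h₂ : IsCanonicalWalk σ p₂)
    (hint₁ : ∀ y ∈ p₁.support, y ≠ v → y ≠ u₁ → σ v < σ y)
    (hint₂ : ∀ y ∈ p₂.support, y ≠ v → y ≠ u₂ → σ v < σ y)
    (hx₁ : x ∈ p₁.support) (hx₂ : x ∈ p₂.support) (hxv : x ≠ v) : p₁.snd = p₂.snd := by
  classical
  have hu₁ : σ u₁ ≤ σ v := h₁.le v p₁.start_mem_support
  have hu₂ : σ u₂ ≤ σ v := h₂.le v p₂.start_mem_support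
  have heq : p₁.takeUntil x hx₁ = p₂.takeUntil x hx₂ :=
    IsCanonicalWalk.eq_of_append hσ (d₁ := p₁.dropUntil x hx₁) (d₂ := p₂.dropUntil x hx₂)
      (by rwa [p₁.take_spec]) (by rwa [p₂.take_spec])
      (le_of_mem_support_takeUntil h₁.isPath hx₁ hu₂ (h₂.le x hx₂)
        fun y hy hyv hyu ↦ hu₂.trans (hint₁ y hy hyv hyu).le)
      (le_of_mem_support_takeUntil h₂.isPath hx₂ hu₁ (h₁.le x hx₁)
        fun y hy hyv hyu ↦ hu₁.trans (hint₂ y hy hyv hyu).le)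
  rw [← p₁.snd_takeUntil hxv hx₁, heq, p₂.snd_takeUntil hxv hx₂]

end CanonicalWalk

section BackPathFamily

variable {V ι : Type} {G : SimpleGraph V} {S : Set V} {u : V} {r : ℕ} {t : ι → V}
  {P : ∀ i, G.Walk u (t i)}

/-- The families of paths over which `bconn G S u r` is maximized, with an arbitrary index type
in place of the `Fin m` of `BConnGE`. -/
structure IsBackPathFamily (S : Set V) (r : ℕ) (P : ∀ i, G.Walk u (t i)) : Prop where
  isPath : ∀ i, (P i).IsPath
  length_le : ∀ i, (P i).length ≤ r
  end_mem : ∀ i, t i ∈ S ∧ t i ≠ u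
  notMem : ∀ i, ∀ w ∈ (P i).support, w ≠ u → w ≠ t i → w ∉ S
  eq_start : ∀ i j, i ≠ j → ∀ w ∈ (P i).support, w ∈ (P j).support → w = u

theorem IsBackPathFamily.injective_end (hP : IsBackPathFamily S r P) :
    Function.Injective fun i ↦ (⟨t i, (hP.end_mem i).1⟩ : S) := by
  intro i j hij
  have htij : t i = t j := congrArg Subtype.val hij
  by_contra hne
  have htj : t i ∈ (P j).support := by
    rw [htij]
    exact (P j).end_mem_support
  exact (hP.end_mem i).2 (hP.eq_start i j hne (t i) (P i).end_mem_support htj)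

theorem IsBackPathFamily.finite (hP : IsBackPathFamily S r P) (hS : S.Finite) : Finite ι :=
  have := hS.to_subtype
  .of_injective _ hP.injective_end

theorem IsBackPathFamily.card_le (hP : IsBackPathFamily S r P) (hS : S.Finite) :
    Nat.card ι ≤ S.ncard :=
  have := hS.to_subtype
  Nat.card_le_card_of_injective _ hP.injective_end

theorem IsBackPathFamily.bConnGE [Finite ι] (hP : IsBackPathFamily S r P) :
    BConnGE G S u r (Nat.card ι) :=
  let e := (Finite.equivFin ι).symm
  ⟨fun i ↦ t (e i), fun i ↦ P (e i), fun i ↦ hP.isPath (e i), fun i ↦ hP.length_le (e i),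
    fun i ↦ hP.end_mem (e i), fun i ↦ hP.notMem (e i),
    fun i j hij ↦ hP.eq_start (e i) (e j) (e.injective.ne hij)⟩

theorem BConnGE.le_bconn {m : ℕ} (h : BConnGE G S u r m) (hS : S.Finite) :
    m ≤ bconn G S u r := by
  refine le_csSup (s := {m | BConnGE G S u r m}) ⟨S.ncard, ?_⟩ h
  rintro k ⟨t, P, hpath, hlen, hend, hint, hdisj⟩
  simpa using IsBackPathFamily.card_le (P := P) ⟨hpath, hlen, hend, hint, hdisj⟩ hS

end BackPathFamily

section WReach

variable {V : Type} {G : SimpleGraph V} {σ : V → ℕ} {r s : ℕ} {u v : V}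

theorem finite_setOf_apply_le (hσ : Function.Injective σ) (v : V) : {y | σ y ≤ σ v}.Finite :=
  (Set.finite_Iic (σ v)).preimage hσ.injOn

theorem exists_isBackPathFamily_canonicalSuccessors (hσ : Function.Injective σ) :
    ∃ (t : canonicalSuccessors G σ r v → V) (P : ∀ z, G.Walk v (t z)),
      IsBackPathFamily {y | σ y ≤ σ v} r P := by
  have hdesc : ∀ z : canonicalSuccessors G σ r v, ∃ (t : V) (q : G.Walk v t),
      IsCanonicalWalk σ q ∧ q.length ≤ r ∧ q.snd = z ∧ σ t < σ v ∧
        ∀ y ∈ q.support, y ≠ v → y ≠ t → σ v < σ y := by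
    rintro ⟨z, u, huv, p, hp, hlen, rfl⟩
    obtain ⟨t, q, hq, hqlen, hsnd, hrest⟩ := hp.exists_descending hσ huv
    exact ⟨t, q, hq, hqlen.trans hlen, hsnd, hrest⟩
  choose t P hcan hlen hsnd hlt hint using hdesc
  refine ⟨t, P, fun z ↦ (hcan z).isPath, hlen,
    fun z ↦ ⟨(hlt z).le, ne_of_apply_ne σ (hlt z).ne⟩,
    fun z w hw hwv hwt ↦ (hint z w hw hwv hwt).not_ge, fun y z hyz x hxy hxz ↦ ?_⟩
  by_contra hxv
  have heq : (P y).snd = (P z).snd :=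
    (hcan y).snd_eq_snd hσ (hcan z) (hint y) (hint z) hxy hxz hxv
  exact hyz (Subtype.ext (by rw [← hsnd y, heq, hsnd z]))

theorem finite_canonicalSuccessors (hσ : Function.Injective σ) :
    (canonicalSuccessors G σ r v).Finite :=
  have ⟨_, _, hP⟩ := exists_isBackPathFamily_canonicalSuccessors hσ
  hP.finite (finite_setOf_apply_le hσ v)

theorem ncard_canonicalSuccessors_le_bconn (hσ : Function.Injective σ) :
    (canonicalSuccessors G σ r v).ncard ≤ bconn G {y | σ y ≤ σ v} v r :=
  have := (finite_canonicalSuccessors (G := G) (r := r) (v := v) hσ).to_subtype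
  have ⟨_, _, hP⟩ := exists_isBackPathFamily_canonicalSuccessors hσ
  hP.bConnGE.le_bconn (finite_setOf_apply_le hσ v)

theorem mem_wReach_iff_exists_isCanonicalWalk (hσ : Function.Injective σ) :
    u ∈ WReach G σ r v ↔ ∃ p : G.Walk v u, IsCanonicalWalk σ p ∧ p.length ≤ r := by
  constructor
  · rintro ⟨huv, q, -, hlen, hint⟩
    have hq : ∀ y ∈ q.support, σ u ≤ σ y := fun y hy ↦ by
      by_cases hyv : y = v
      · exact hyv ▸ huv
      by_cases hyu : y = u
      · exact hyu ▸ le_rfl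
      exact (hint y hy hyv hyu).le
    obtain ⟨p, hp, hpq⟩ := exists_isCanonicalWalk_length_le hq
    exact ⟨p, hp, hpq.trans hlen⟩
  · rintro ⟨p, hp, hlen⟩
    exact ⟨hp.le v p.start_mem_support, p, hp.isPath, hlen,
      fun y hy _ hyu ↦ (hp.le y hy).lt_of_ne (hσ.ne hyu.symm)⟩

theorem wReach_zero_subset : WReach G σ 0 v ⊆ {v} := by
  rintro u ⟨-, p, -, hlen, -⟩
  exact (SimpleGraph.Walk.eq_of_length_eq_zero (Nat.le_zero.mp hlen)).symm

theorem wReach_succ_subset (hσ : Function.Injective σ) (hs : s < r) :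
    WReach G σ (s + 1) v ⊆ insert v (⋃ z ∈ canonicalSuccessors G σ r v, WReach G σ s z) := by
  intro u hu
  obtain ⟨p, hp, hlen⟩ := (mem_wReach_iff_exists_isCanonicalWalk hσ).mp hu
  rcases eq_or_ne u v with rfl | huv
  · exact Set.mem_insert _ _
  cases p with
  | nil => exact absurd rfl huv
  | @cons _ z _ hadj q =>
    have hz : z ∈ canonicalSuccessors G σ r v := ⟨u, huv, _, hp, hlen.trans hs, by simp⟩
    have huz : u ∈ WReach G σ s z :=
      (mem_wReach_iff_exists_isCanonicalWalk hσ).mpr ⟨q, hp.of_cons, Nat.le_of_succ_le_succ hlen⟩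
    exact Set.mem_insert_of_mem v (Set.mem_biUnion hz huz)

theorem finite_wReach (hσ : Function.Injective σ) : (WReach G σ r v).Finite :=
  (finite_setOf_apply_le hσ v).subset fun _ hu ↦ hu.1

theorem ncard_wReach_succ_le (hσ : Function.Injective σ) (hs : s < r) {n : ℕ}
    (hn : ∀ z, (WReach G σ s z).ncard ≤ n) :
    (WReach G σ (s + 1) v).ncard ≤ bconn G {y | σ y ≤ σ v} v r * n + 1 := by
  have hfin : (⋃ z ∈ canonicalSuccessors G σ r v, WReach G σ s z).Finite :=
    (finite_canonicalSuccessors hσ).biUnion fun _ _ ↦ finite_wReach hσ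
  calc (WReach G σ (s + 1) v).ncard
      ≤ (insert v (⋃ z ∈ canonicalSuccessors G σ r v, WReach G σ s z)).ncard :=
        Set.ncard_le_ncard (wReach_succ_subset hσ hs) (hfin.insert v)
    _ ≤ (⋃ z ∈ canonicalSuccessors G σ r v, WReach G σ s z).ncard + 1 := Set.ncard_insert_le _ _
    _ ≤ (canonicalSuccessors G σ r v).ncard * n + 1 := by
        gcongr
        exact ncard_biUnion_le_ncard_mul (finite_canonicalSuccessors hσ) _ fun z _ ↦ hn z
    _ ≤ bconn G {y | σ y ≤ σ v} v r * n + 1 := by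
        gcongr
        exact ncard_canonicalSuccessors_le_bconn hσ

end WReach

theorem stmt6_general {V : Type} (G : SimpleGraph V) (σ : V → ℕ)
    (hσ : Function.Injective σ) (c r : ℕ) (hadm : ∀ w, bconn G {y | σ y ≤ σ w} w r ≤ c) (v : V) :
    (WReach G σ r v).ncard ≤ ∑ i ∈ Finset.range (r + 1), c ^ i := by
  suffices h : ∀ s ≤ r, ∀ v, (WReach G σ s v).ncard ≤ ∑ i ∈ Finset.range (s + 1), c ^ i from
    h r le_rfl v
  intro s
  induction s with
  | zero =>
    intro _ v
    simpa using Set.ncard_le_ncard (wReach_zero_subset (G := G) (σ := σ) (v := v))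
  | succ s ih =>
    intro hs v
    calc (WReach G σ (s + 1) v).ncard
        ≤ bconn G {y | σ y ≤ σ v} v r * ∑ i ∈ Finset.range (s + 1), c ^ i + 1 :=
          ncard_wReach_succ_le hσ hs (ih (by lia))
      _ ≤ c * ∑ i ∈ Finset.range (s + 1), c ^ i + 1 := by
          gcongr
          exact hadm v
      _ = ∑ i ∈ Finset.range (s + 1 + 1), c ^ i := geom_sum_succ.symm

/-- For any `c ≥ 2` and any vertex ordering `σ` of `G` with `adm_r(G,σ) ≤ c`,
one has `wcol_r(G,σ) ≤ (c^{r+1} − 1)/(c − 1)`. -/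
theorem stmt6 {V : Type} [Fintype V] (G : SimpleGraph V) (σ : V → ℕ)
    (hσ : Function.Injective σ) (c r : ℕ) (hc : 2 ≤ c) (hadm : admOrd G σ r ≤ c) :
    wcolOrd G σ r ≤ (c ^ (r + 1) - 1) / (c - 1) := by
  rw [← Nat.geomSum_eq hc]
  exact Finset.sup_le fun v _ ↦ stmt6_general G σ hσ c r
    (fun w ↦ Finset.sup_le_iff.mp hadm w (Finset.mem_univ w)) v
end
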